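/- Correctness of the combined algorithm Memo-(la,at) (Theorem 8): For every (la,at)-NFA A = (P, Q, q0, F, T), every input string w over Σ, and every position i ∈ {0, …, |w|}, Match-(la,at)_{A,w}(q0, i) = f(Memo-(la,at)^{M0}_{A,A,w}(q0, i)), where f converts results by f(Failure(j)) = Failure and f(SuccessAt(i', K)) = SuccessAt(i') (a top-level call never returns the bare value Success). -/

import Mathlib

namespace RegexMemo

/-! ## Generic runs, `φ`, `sub`, `sub*` -/

variable {α : Type}

/-- `φ_s(ℓ, n)`: the index of the result value of the call at index `ℓ`. -/
def phiAux (isRet : α → Bool) (s : List α) (ℓ n : ℕ) : Option ℕ :=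
  match h : s[ℓ]? with
  | none => none
  | some e =>
    if isRet e then
      if n ≤ 1 then some ℓ
      else phiAux isRet s (ℓ + 1) (n - 1)
    else phiAux isRet s (ℓ + 1) (n + 1)
termination_by s.length - ℓ
decreasing_by
  all_goals
    have hl : ℓ < s.length := by
      by_contra hc
      have : s[ℓ]? = none := List.getElem?_eq_none (by omega)
      simp [this] at h
    omega

/-- `φ_s(ℓ) = φ_s(ℓ, 0)`. -/
def phi (isRet : α → Bool) (s : List α) (ℓ : ℕ) : Option ℕ := phiAux isRet s ℓ 0

/-- `sub(s, ℓ)`: replace the memoization-table invocation at index `ℓ` (an element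
`M(q,i)` together with its immediately following result) by `C(q,i)` followed by the
subsequence `s[ℓ'+1] … s[φ_s(ℓ')]`, where `ℓ'` is the first index with `s[ℓ'] = C(q,i)`.
Here `m2c` maps a memoization element `M(q,i)` to the corresponding call element `C(q,i)`
(and everything else to `none`), and `isRet` recognizes result elements. -/
def subExpand [DecidableEq α] (m2c : α → Option α) (isRet : α → Bool)
    (s : List α) (ℓ : ℕ) : Option (List α) :=
  match s[ℓ]? with
  | some e =>
    match m2c e with
    | some c =>
      match s.findIdx? (· == c) with
      | some ℓ' =>
        match phi isRet s ℓ' with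
        | some m =>
          some (s.take ℓ ++ [c] ++ ((s.drop (ℓ' + 1)).take (m - ℓ')) ++ s.drop (ℓ + 2))
        | none => none
      | none => none
    | none => none
  | none => none

/-- `sub*`: repeatedly locate the first memoization element and expand it,
until no memoization element remains. `SubStar m2c isRet s t` means `sub*(s) = t`. -/
inductive SubStar [DecidableEq α] (m2c : α → Option α) (isRet : α → Bool) :
    List α → List α → Prop where
  | done {s : List α} : s.findIdx? (fun e => (m2c e).isSome) = none →
      SubStar m2c isRet s s
  | step {s s' t : List α} {ℓ : ℕ} :
      s.findIdx? (fun e => (m2c e).isSome) = some ℓ →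
      subExpand m2c isRet s ℓ = some s' →
      SubStar m2c isRet s' t →
      SubStar m2c isRet s t

/-- The number of (recursive) calls recorded in a run: the number of `C`/`M` elements. -/
def callCount (isCall : α → Bool) (s : List α) : ℕ := (s.filter isCall).length

variable {Sigma S : Type}

/-- Results of backtracking matching: `SuccessAt i'` or `Failure`. -/
inductive Result : Type where
  | successAt : ℕ → Result
  | failure : Result
deriving DecidableEq

/-! ## Plain NFAs -/

/-- Transitions of a plain NFA. -/
inductive Trans (Sigma S : Type) : Type where
  | eps : S → Trans Sigma S
  | branch : S → S → Trans Sigma S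
  | char : Sigma → S → Trans Sigma S

/-- A (plain) NFA over the alphabet `Sigma` with (finite) state type `S`:
an initial state, a set of accepting states, and a transition function
(whose value is only relevant on non-accepting states). -/
structure NFA (Sigma S : Type) where
  q0 : S
  F : Set S
  T : S → Trans Sigma S

/-- One ε-step: an `Eps` or `Branch` transition of a non-accepting state. -/
def NFA.epsStep (A : NFA Sigma S) (q q' : S) : Prop :=
  q ∉ A.F ∧ (A.T q = Trans.eps q' ∨ (∃ q'', A.T q = Trans.branch q' q'') ∨
    (∃ q'', A.T q = Trans.branch q'' q'))

/-- The NFA has no ε-loops. -/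
def NFA.NoEpsLoops (A : NFA Sigma S) : Prop :=
  ∀ q : S, ¬ Relation.TransGen A.epsStep q q

open Classical in
/-- The in-degree `#in(q)` of a state of a plain NFA. -/
noncomputable def NFA.inDeg [Fintype S] (A : NFA Sigma S) (q : S) : ℕ :=
  (Finset.univ.filter fun q' : S => q' ∉ A.F ∧ A.T q' = Trans.eps q).card +
  (Finset.univ.filter fun q' : S => q' ∉ A.F ∧ ∃ σ, A.T q' = Trans.char σ q).card +
  (Finset.univ.filter fun q' : S => q' ∉ A.F ∧ ∃ q'', A.T q' = Trans.branch q q'').card +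
  (Finset.univ.filter fun q' : S => q' ∉ A.F ∧ ∃ q'', A.T q' = Trans.branch q'' q).card +
  (if q = A.q0 then 1 else 0)

/-- The maximal in-degree `#in(A)` of a plain NFA. -/
noncomputable def NFA.inDegMax [Fintype S] (A : NFA Sigma S) : ℕ :=
  Finset.univ.sup fun q : S => A.inDeg q

/-- Elements of runs of `Match`/`Memo`: calls `C(q,i)`, memoization-table invocations
`M(q,i)`, and results `S(i')` and `F`. -/
inductive RunElem (S : Type) : Type where
  | call : S → ℕ → RunElem S
  | memo : S → ℕ → RunElem S
  | succ : ℕ → RunElem S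
  | fail : RunElem S
deriving DecidableEq

/-- The run element recording the return of a result. -/
def Result.elem {S : Type} : Result → RunElem S
  | .successAt i => .succ i
  | .failure => .fail

def RunElem.isRet : RunElem S → Bool
  | .succ _ => true
  | .fail => true
  | _ => false

def RunElem.isCall : RunElem S → Bool
  | .call _ _ => true
  | .memo _ _ => true
  | _ => false

/-- `M(q,i) ↦ C(q,i)`. -/
def memoToCall : RunElem S → Option (RunElem S)
  | .memo q i => some (.call q i)
  | _ => none

/-- Big-step semantics (together with the produced run) of the backtracking
matching algorithm `Match` for plain NFAs:
`MatchRun A w q i r s` means the call `Match_{A,w}(q, i)` terminates with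
result `r` and produces the run `s`. -/
inductive MatchRun (A : NFA Sigma S) (w : List Sigma) :
    S → ℕ → Result → List (RunElem S) → Prop where
  | accept {q : S} {i : ℕ} : q ∈ A.F →
      MatchRun A w q i (.successAt i) [.call q i, .succ i]
  | eps {q q' : S} {i : ℕ} {r : Result} {s : List (RunElem S)} :
      q ∉ A.F → A.T q = Trans.eps q' →
      MatchRun A w q' i r s →
      MatchRun A w q i r (.call q i :: s ++ [r.elem])
  | branchSucc {q q' q'' : S} {i i' : ℕ} {s : List (RunElem S)} :
      q ∉ A.F → A.T q = Trans.branch q' q'' →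
      MatchRun A w q' i (.successAt i') s →
      MatchRun A w q i (.successAt i') (.call q i :: s ++ [RunElem.succ i'])
  | branchFail {q q' q'' : S} {i : ℕ} {r : Result} {s s' : List (RunElem S)} :
      q ∉ A.F → A.T q = Trans.branch q' q'' →
      MatchRun A w q' i .failure s →
      MatchRun A w q'' i r s' →
      MatchRun A w q i r (.call q i :: s ++ s' ++ [r.elem])
  | charSucc {q q' : S} {σ : Sigma} {i : ℕ} {r : Result} {s : List (RunElem S)} :
      q ∉ A.F → A.T q = Trans.char σ q' →
      w[i]? = some σ →
      MatchRun A w q' (i + 1) r s →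
      MatchRun A w q i r (.call q i :: s ++ [r.elem])
  | charFail {q q' : S} {σ : Sigma} {i : ℕ} :
      q ∉ A.F → A.T q = Trans.char σ q' →
      w[i]? ≠ some σ →
      MatchRun A w q i .failure [.call q i, .fail]

/-- Record `M(q,i) := Failure` in the memoization table if the result is a failure. -/
def recFail [DecidableEq S] (M : S × ℕ → Bool) (q : S) (i : ℕ) : Result → (S × ℕ → Bool)
  | .failure => fun p => if p = (q, i) then true else M p
  | _ => M

/-- Big-step semantics (with resulting memoization table and produced run) of the
memoized backtracking matching algorithm `Memo` for plain NFAs: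
`MemoRun A w q i M M' r s` means the call `Memo^M_{A,w}(q, i)` terminates with result
`r`, final memoization table `M'` (where `M p = true` means `Failure` is recorded at the
key `p`), and produces the run `s`. -/
inductive MemoRun [DecidableEq S] (A : NFA Sigma S) (w : List Sigma) :
    S → ℕ → (S × ℕ → Bool) → (S × ℕ → Bool) → Result → List (RunElem S) → Prop where
  | memoHit {q : S} {i : ℕ} {M : S × ℕ → Bool} : M (q, i) = true →
      MemoRun A w q i M M .failure [.memo q i, .fail]
  | accept {q : S} {i : ℕ} {M : S × ℕ → Bool} : M (q, i) = false → q ∈ A.F →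
      MemoRun A w q i M M (.successAt i) [.call q i, .succ i]
  | eps {q q' : S} {i : ℕ} {M M' : S × ℕ → Bool} {r : Result} {s : List (RunElem S)} :
      M (q, i) = false → q ∉ A.F → A.T q = Trans.eps q' →
      MemoRun A w q' i M M' r s →
      MemoRun A w q i M (recFail M' q i r) r (.call q i :: s ++ [r.elem])
  | branchSucc {q q' q'' : S} {i i' : ℕ} {M M' : S × ℕ → Bool} {s : List (RunElem S)} :
      M (q, i) = false → q ∉ A.F → A.T q = Trans.branch q' q'' →
      MemoRun A w q' i M M' (.successAt i') s →
      MemoRun A w q i M M' (.successAt i') (.call q i :: s ++ [RunElem.succ i'])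
  | branchFail {q q' q'' : S} {i : ℕ} {M M' M'' : S × ℕ → Bool} {r : Result}
      {s s' : List (RunElem S)} :
      M (q, i) = false → q ∉ A.F → A.T q = Trans.branch q' q'' →
      MemoRun A w q' i M M' .failure s →
      MemoRun A w q'' i M' M'' r s' →
      MemoRun A w q i M (recFail M'' q i r) r (.call q i :: s ++ s' ++ [r.elem])
  | charSucc {q q' : S} {σ : Sigma} {i : ℕ} {M M' : S × ℕ → Bool} {r : Result}
      {s : List (RunElem S)} :
      M (q, i) = false → q ∉ A.F → A.T q = Trans.char σ q' →
      w[i]? = some σ →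
      MemoRun A w q' (i + 1) M M' r s →
      MemoRun A w q i M (recFail M' q i r) r (.call q i :: s ++ [r.elem])
  | charFail {q q' : S} {σ : Sigma} {i : ℕ} {M : S × ℕ → Bool} :
      M (q, i) = false → q ∉ A.F → A.T q = Trans.char σ q' →
      w[i]? ≠ some σ →
      MemoRun A w q i M (recFail M q i .failure) .failure [.call q i, .fail]

/-! ## NFAs with sub-automata -/

/-- Kind labels of sub-automaton transitions: positive/negative look-ahead/look-behind
and atomic grouping. -/
inductive Kind : Type where
  | pla | nla | plb | nlb | at
deriving DecidableEq

mutual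
/-- An NFA with sub-automata `⟨Q, q0, F, T⟩`: a list of top-level states, an initial
state, accepting states, and a transition function (relevant on non-accepting top-level
states) whose transitions may be labelled with further NFAs with sub-automata. -/
inductive SubNFA (Sigma S : Type) : Type where
  | mk : List S → S → List S → (S → SubTrans Sigma S) → SubNFA Sigma S

/-- Transitions of an NFA with sub-automata. -/
inductive SubTrans (Sigma S : Type) : Type where
  | eps : S → SubTrans Sigma S
  | branch : S → S → SubTrans Sigma S
  | char : Sigma → S → SubTrans Sigma S
  | sub : Kind → SubNFA Sigma S → S → SubTrans Sigma S
end

/-- Top-level states `Q`. -/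
def SubNFA.Q : SubNFA Sigma S → List S
  | .mk Q _ _ _ => Q

/-- Initial state `q0`. -/
def SubNFA.q0 : SubNFA Sigma S → S
  | .mk _ q0 _ _ => q0

/-- Accepting states `F`. -/
def SubNFA.F : SubNFA Sigma S → List S
  | .mk _ _ F _ => F

/-- Transition function `T`. -/
def SubNFA.T : SubNFA Sigma S → S → SubTrans Sigma S
  | .mk _ _ _ T => T

mutual
/-- All automata occurring within an NFA with sub-automata (including itself), each
together with its nesting depth of atomic grouping (the number of enclosing
`at`-sub-automaton boundaries). -/
def SubNFA.compsD : SubNFA Sigma S → List (SubNFA Sigma S × ℕ)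
  | .mk Q q0 F T => (.mk Q q0 F T, 0) :: Q.flatMap (fun q => SubTrans.subCompsD (T q))

def SubTrans.subCompsD : SubTrans Sigma S → List (SubNFA Sigma S × ℕ)
  | .sub k A' _ => (SubNFA.compsD A').map (fun p => (p.1, p.2 + (if k = Kind.at then 1 else 0)))
  | _ => []
end

/-- All automata occurring within `A` (including `A` itself). -/
def SubNFA.comps (A : SubNFA Sigma S) : List (SubNFA Sigma S) :=
  A.compsD.map Prod.fst

/-- The set (list) of all states `P` occurring within `A`. -/
def SubNFA.allStates (A : SubNFA Sigma S) : List S :=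
  A.comps.flatMap SubNFA.Q

/-- The nesting depth of atomic grouping `ν_A(q)` of a state `q` of `A`. -/
def SubNFA.nu [DecidableEq S] (A : SubNFA Sigma S) (q : S) : ℕ :=
  (A.compsD.map (fun p => if q ∈ p.1.Q then p.2 else 0)).sum

/-- The maximal nesting depth of atomic grouping `ν(A)`. -/
def SubNFA.nuMax [DecidableEq S] (A : SubNFA Sigma S) : ℕ :=
  (A.allStates.map A.nu).foldr max 0

/-- Local wellformedness of one automaton: the initial state is a top-level state,
accepting states are top-level states, and transitions of non-accepting top-level
states lead to top-level states. -/
def SubNFA.LocalOK (B : SubNFA Sigma S) : Prop :=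
  B.q0 ∈ B.Q ∧ (∀ f ∈ B.F, f ∈ B.Q) ∧ ∀ q ∈ B.Q, q ∉ B.F →
    match B.T q with
    | .eps q' => q' ∈ B.Q
    | .branch q' q'' => q' ∈ B.Q ∧ q'' ∈ B.Q
    | .char _ q' => q' ∈ B.Q
    | .sub _ _ q' => q' ∈ B.Q

/-- Wellformedness of an NFA with sub-automata: every component automaton is locally
wellformed, and all the state lists are disjoint and duplicate-free (so that `P` is
the disjoint union of the top-level state sets of all components). -/
def SubNFA.WF (A : SubNFA Sigma S) : Prop :=
  (∀ B ∈ A.comps, B.LocalOK) ∧ A.allStates.Nodup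

/-- The kind labels of all sub-automaton transitions occurring in `A`. -/
def SubNFA.kinds [DecidableEq S] (A : SubNFA Sigma S) : List Kind :=
  A.comps.flatMap fun B =>
    (B.Q.filter (fun q => decide (q ∉ B.F))).filterMap fun q =>
      match B.T q with
      | .sub k _ _ => some k
      | _ => none

/-- A la-NFA: all kind labels are look-around labels (for simplicity, only positive
look-ahead `pla` is treated). -/
def SubNFA.IsLaNFA [DecidableEq S] (A : SubNFA Sigma S) : Prop :=
  ∀ k ∈ A.kinds, k = Kind.pla

/-- An at-NFA: all kind labels are `at` (atomic grouping). -/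
def SubNFA.IsAtNFA [DecidableEq S] (A : SubNFA Sigma S) : Prop :=
  ∀ k ∈ A.kinds, k = Kind.at

/-- A (la,at)-NFA in which (for simplicity) only the kinds `pla` and `at` occur. -/
def SubNFA.IsLaAtNFA [DecidableEq S] (A : SubNFA Sigma S) : Prop :=
  ∀ k ∈ A.kinds, k = Kind.pla ∨ k = Kind.at

/-- One global ε-step of an NFA with sub-automata: an `Eps` or `Branch` transition, or a
`Sub` transition with a look-around kind (from the transition's source to its successor),
of a non-accepting top-level state of any component automaton. -/
def SubNFA.epsStep (A : SubNFA Sigma S) (q q' : S) : Prop :=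
  ∃ B ∈ A.comps, q ∈ B.Q ∧ q ∉ B.F ∧
    (B.T q = SubTrans.eps q' ∨
     (∃ q'', B.T q = SubTrans.branch q' q'') ∨
     (∃ q'', B.T q = SubTrans.branch q'' q') ∨
     (∃ k A'', B.T q = SubTrans.sub k A'' q' ∧ k ≠ Kind.at))

/-- The NFA with sub-automata has no ε-loops. -/
def SubNFA.NoEpsLoops (A : SubNFA Sigma S) : Prop :=
  ∀ q : S, ¬ Relation.TransGen A.epsStep q q

/-- All pairs (state, transition) of non-accepting top-level states of all component
automata of `A`. -/
def SubNFA.allTransNF [DecidableEq S] (A : SubNFA Sigma S) : List (S × SubTrans Sigma S) :=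
  A.comps.flatMap fun B => (B.Q.filter (fun q => decide (q ∉ B.F))).map fun q => (q, B.T q)

/-- How many of the buckets in the definition of the in-degree of `q` a given
transition contributes to. -/
def SubTrans.hits [DecidableEq S] (t : SubTrans Sigma S) (q : S) : ℕ :=
  match t with
  | .eps q' => if q' = q then 1 else 0
  | .char _ q' => if q' = q then 1 else 0
  | .branch q' q'' => (if q' = q then 1 else 0) + (if q'' = q then 1 else 0)
  | .sub _ _ q' => if q' = q then 1 else 0

/-- The in-degree `#in(q)` of a state of an NFA with sub-automata. -/
def SubNFA.inDeg [DecidableEq S] (A : SubNFA Sigma S) (q : S) : ℕ :=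
  (A.allTransNF.map (fun p => p.2.hits q)).sum +
  (if q ∈ A.comps.map SubNFA.q0 then 1 else 0)

/-- The maximal in-degree `#in(A)`. -/
def SubNFA.inDegMax [DecidableEq S] (A : SubNFA Sigma S) : ℕ :=
  (A.allStates.map A.inDeg).foldr max 0

/-! ## run elements for `Memo-la` and `Match-(la,at)` -/

/-- Elements of runs of `Memo-la` (and of `Match-(la,at)`): calls `C(q,i)`,
memoization-table invocations `M(q,i)`, and the results `S(i')`, `S'` (bare success),
and `F`. -/
inductive LaRunElem (S : Type) : Type where
  | call : S → ℕ → LaRunElem S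
  | memo : S → ℕ → LaRunElem S
  | succAt : ℕ → LaRunElem S
  | succ : LaRunElem S
  | fail : LaRunElem S
deriving DecidableEq

def LaRunElem.isRet : LaRunElem S → Bool
  | .succAt _ => true
  | .succ => true
  | .fail => true
  | _ => false

def LaRunElem.isCall : LaRunElem S → Bool
  | .call _ _ => true
  | .memo _ _ => true
  | _ => false

def laMemoToCall : LaRunElem S → Option (LaRunElem S)
  | .memo q i => some (.call q i)
  | _ => none

def Result.laElem {S : Type} : Result → LaRunElem S
  | .successAt i => .succAt i
  | .failure => .fail

/-! ## The backtracking matching algorithm `Match-(la,at)` -/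

/-- Big-step semantics (with produced run) of the backtracking matching algorithm
`Match-(la,at)` for NFAs with sub-automata: `LAMatchRun w A q i r s` means the call
`Match-(la,at)_{A,w}(q, i)` terminates with result `r` and produces the run `s`.
For simplicity, only the look-around kind `pla` (besides `at`) is treated. -/
inductive LAMatchRun (w : List Sigma) :
    SubNFA Sigma S → S → ℕ → Result → List (LaRunElem S) → Prop where
  | accept {A : SubNFA Sigma S} {q : S} {i : ℕ} : q ∈ A.F →
      LAMatchRun w A q i (.successAt i) [.call q i, .succAt i]
  | eps {A : SubNFA Sigma S} {q q' : S} {i : ℕ} {r : Result} {s : List (LaRunElem S)} :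
      q ∉ A.F → A.T q = SubTrans.eps q' →
      LAMatchRun w A q' i r s →
      LAMatchRun w A q i r (.call q i :: s ++ [r.laElem])
  | branchSucc {A : SubNFA Sigma S} {q q' q'' : S} {i i' : ℕ} {s : List (LaRunElem S)} :
      q ∉ A.F → A.T q = SubTrans.branch q' q'' →
      LAMatchRun w A q' i (.successAt i') s →
      LAMatchRun w A q i (.successAt i') (.call q i :: s ++ [LaRunElem.succAt i'])
  | branchFail {A : SubNFA Sigma S} {q q' q'' : S} {i : ℕ} {r : Result}
      {s s' : List (LaRunElem S)} :
      q ∉ A.F → A.T q = SubTrans.branch q' q'' →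
      LAMatchRun w A q' i .failure s →
      LAMatchRun w A q'' i r s' →
      LAMatchRun w A q i r (.call q i :: s ++ s' ++ [r.laElem])
  | charSucc {A : SubNFA Sigma S} {q q' : S} {σ : Sigma} {i : ℕ} {r : Result}
      {s : List (LaRunElem S)} :
      q ∉ A.F → A.T q = SubTrans.char σ q' →
      w[i]? = some σ →
      LAMatchRun w A q' (i + 1) r s →
      LAMatchRun w A q i r (.call q i :: s ++ [r.laElem])
  | charFail {A : SubNFA Sigma S} {q q' : S} {σ : Sigma} {i : ℕ} :
      q ∉ A.F → A.T q = SubTrans.char σ q' →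
      w[i]? ≠ some σ →
      LAMatchRun w A q i .failure [.call q i, .fail]
  | plaSucc {A A' : SubNFA Sigma S} {q q' : S} {i i' : ℕ} {r : Result}
      {s1 s2 : List (LaRunElem S)} :
      q ∉ A.F → A.T q = SubTrans.sub Kind.pla A' q' →
      LAMatchRun w A' A'.q0 i (.successAt i') s1 →
      LAMatchRun w A q' i r s2 →
      LAMatchRun w A q i r (.call q i :: s1 ++ s2 ++ [r.laElem])
  | plaFail {A A' : SubNFA Sigma S} {q q' : S} {i : ℕ} {s1 : List (LaRunElem S)} :
      q ∉ A.F → A.T q = SubTrans.sub Kind.pla A' q' →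
      LAMatchRun w A' A'.q0 i .failure s1 →
      LAMatchRun w A q i .failure (.call q i :: s1 ++ [LaRunElem.fail])
  | atSucc {A A' : SubNFA Sigma S} {q q' : S} {i i' : ℕ} {r : Result}
      {s1 s2 : List (LaRunElem S)} :
      q ∉ A.F → A.T q = SubTrans.sub Kind.at A' q' →
      LAMatchRun w A' A'.q0 i (.successAt i') s1 →
      LAMatchRun w A q' i' r s2 →
      LAMatchRun w A q i r (.call q i :: s1 ++ s2 ++ [r.laElem])
  | atFail {A A' : SubNFA Sigma S} {q q' : S} {i : ℕ} {s1 : List (LaRunElem S)} :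
      q ∉ A.F → A.T q = SubTrans.sub Kind.at A' q' →
      LAMatchRun w A' A'.q0 i .failure s1 →
      LAMatchRun w A q i .failure (.call q i :: s1 ++ [LaRunElem.fail])

/-! ## `Memo-la` -/

/-- Values of the memoization table of `Memo-la`: `Failure` or `Success`. -/
inductive LaVal : Type where
  | success : LaVal
  | failure : LaVal
deriving DecidableEq

/-- Results of `Memo-la`: `SuccessAt i'`, bare `Success`, or `Failure`. -/
inductive LaResult : Type where
  | successAt : ℕ → LaResult
  | success : LaResult
  | failure : LaResult
deriving DecidableEq

def LaVal.toResult : LaVal → LaResult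
  | .success => .success
  | .failure => .failure

def LaResult.elem {S : Type} : LaResult → LaRunElem S
  | .successAt i => .succAt i
  | .success => .succ
  | .failure => .fail

def Result.toLa : Result → LaResult
  | .successAt i => .successAt i
  | .failure => .failure

/-- The final recording of `Memo-la`: `M(q,i) := Success` if the result is
`SuccessAt i'` or `Success`, and `M(q,i) := Failure` if the result is `Failure`. -/
def laRecord [DecidableEq S] (M : S × ℕ → Option LaVal) (q : S) (i : ℕ) (r : LaResult) :
    S × ℕ → Option LaVal :=
  fun p => if p = (q, i) then
    some (match r with | .failure => LaVal.failure | _ => LaVal.success)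
  else M p

/-- Big-step semantics (with resulting memoization table and produced run) of the
memoized backtracking matching algorithm `Memo-la` for la-NFAs:
`MemoLaRun w A q i M M' r s` means the call `Memo-la^M_{A,w}(q, i)` terminates with
result `r`, final memoization table `M'`, and produces the run `s`. The memoization
table is shared between the top-level automaton and all sub-automata. -/
inductive MemoLaRun [DecidableEq S] (w : List Sigma) :
    SubNFA Sigma S → S → ℕ → (S × ℕ → Option LaVal) → (S × ℕ → Option LaVal) →
    LaResult → List (LaRunElem S) → Prop where
  | memoHit {A : SubNFA Sigma S} {q : S} {i : ℕ} {M : S × ℕ → Option LaVal} {v : LaVal} :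
      M (q, i) = some v →
      MemoLaRun w A q i M M v.toResult [.memo q i, v.toResult.elem]
  | accept {A : SubNFA Sigma S} {q : S} {i : ℕ} {M : S × ℕ → Option LaVal} :
      M (q, i) = none → q ∈ A.F →
      MemoLaRun w A q i M (laRecord M q i (.successAt i)) (.successAt i)
        [.call q i, .succAt i]
  | eps {A : SubNFA Sigma S} {q q' : S} {i : ℕ} {M M' : S × ℕ → Option LaVal}
      {r : LaResult} {s : List (LaRunElem S)} :
      M (q, i) = none → q ∉ A.F → A.T q = SubTrans.eps q' →
      MemoLaRun w A q' i M M' r s →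
      MemoLaRun w A q i M (laRecord M' q i r) r (.call q i :: s ++ [r.elem])
  | branchNoFail {A : SubNFA Sigma S} {q q' q'' : S} {i : ℕ}
      {M M' : S × ℕ → Option LaVal} {r : LaResult} {s : List (LaRunElem S)} :
      M (q, i) = none → q ∉ A.F → A.T q = SubTrans.branch q' q'' →
      MemoLaRun w A q' i M M' r s → r ≠ .failure →
      MemoLaRun w A q i M (laRecord M' q i r) r (.call q i :: s ++ [r.elem])
  | branchFail {A : SubNFA Sigma S} {q q' q'' : S} {i : ℕ}
      {M M1 M2 : S × ℕ → Option LaVal} {r : LaResult} {s1 s2 : List (LaRunElem S)} :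
      M (q, i) = none → q ∉ A.F → A.T q = SubTrans.branch q' q'' →
      MemoLaRun w A q' i M M1 .failure s1 →
      MemoLaRun w A q'' i M1 M2 r s2 →
      MemoLaRun w A q i M (laRecord M2 q i r) r (.call q i :: s1 ++ s2 ++ [r.elem])
  | charSucc {A : SubNFA Sigma S} {q q' : S} {σ : Sigma} {i : ℕ}
      {M M' : S × ℕ → Option LaVal} {r : LaResult} {s : List (LaRunElem S)} :
      M (q, i) = none → q ∉ A.F → A.T q = SubTrans.char σ q' →
      w[i]? = some σ →
      MemoLaRun w A q' (i + 1) M M' r s →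
      MemoLaRun w A q i M (laRecord M' q i r) r (.call q i :: s ++ [r.elem])
  | charFail {A : SubNFA Sigma S} {q q' : S} {σ : Sigma} {i : ℕ}
      {M : S × ℕ → Option LaVal} :
      M (q, i) = none → q ∉ A.F → A.T q = SubTrans.char σ q' →
      w[i]? ≠ some σ →
      MemoLaRun w A q i M (laRecord M q i .failure) .failure [.call q i, .fail]
  | plaSucc {A A' : SubNFA Sigma S} {q q' : S} {i : ℕ}
      {M M1 M2 : S × ℕ → Option LaVal} {r1 r : LaResult} {s1 s2 : List (LaRunElem S)} :
      M (q, i) = none → q ∉ A.F → A.T q = SubTrans.sub Kind.pla A' q' →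
      MemoLaRun w A' A'.q0 i M M1 r1 s1 → r1 ≠ .failure →
      MemoLaRun w A q' i M1 M2 r s2 →
      MemoLaRun w A q i M (laRecord M2 q i r) r (.call q i :: s1 ++ s2 ++ [r.elem])
  | plaFail {A A' : SubNFA Sigma S} {q q' : S} {i : ℕ}
      {M M1 : S × ℕ → Option LaVal} {s1 : List (LaRunElem S)} :
      M (q, i) = none → q ∉ A.F → A.T q = SubTrans.sub Kind.pla A' q' →
      MemoLaRun w A' A'.q0 i M M1 .failure s1 →
      MemoLaRun w A q i M (laRecord M1 q i .failure) .failure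
        (.call q i :: s1 ++ [LaRunElem.fail])

/-! ## `Memo-at` -/

/-- Results of `Memo-at`: `SuccessAt(i', K)` with a set `K` of delayed memoization keys,
or `Failure(j)` with a nesting depth `j`. -/
inductive AtResult (S : Type) : Type where
  | successAt : ℕ → Finset (S × ℕ) → AtResult S
  | failure : ℕ → AtResult S

/-- Elements of runs of `Memo-at`: calls `C(q,i)`, memoization-table invocations
`M(q,i)`, and results `S(i')` and `F(j)`. -/
inductive AtRunElem (S : Type) : Type where
  | call : S → ℕ → AtRunElem S
  | memo : S → ℕ → AtRunElem S
  | succ : ℕ → AtRunElem S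
  | fail : ℕ → AtRunElem S
deriving DecidableEq

def AtRunElem.isRet : AtRunElem S → Bool
  | .succ _ => true
  | .fail _ => true
  | _ => false

def AtRunElem.isCall : AtRunElem S → Bool
  | .call _ _ => true
  | .memo _ _ => true
  | _ => false

def atMemoToCall : AtRunElem S → Option (AtRunElem S)
  | .memo q i => some (.call q i)
  | _ => none

def AtResult.elem {S : Type} : AtResult S → AtRunElem S
  | .successAt i _ => .succ i
  | .failure j => .fail j

/-- `f`, converting results of `Memo-at` to results of `Match-(la,at)`. -/
def AtResult.toResult {S : Type} : AtResult S → Result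
  | .successAt i _ => .successAt i
  | .failure _ => .failure

/-- The final step of `Memo-at`: on success, the key `(q,i)` is added to the set of
delayed keys. -/
def atFinal [DecidableEq S] (q : S) (i : ℕ) : AtResult S → AtResult S
  | .successAt i' K => .successAt i' (insert (q, i) K)
  | .failure j => .failure j

/-- The final recording of `Memo-at`: `M(q,i) := Failure(j)` if the result is
`Failure(j)`. -/
def atRecord [DecidableEq S] (M : S × ℕ → Option ℕ) (q : S) (i : ℕ) :
    AtResult S → (S × ℕ → Option ℕ)
  | .failure j => fun p => if p = (q, i) then some j else M p
  | _ => M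

/-- Batch recording `M(k) := Failure(j)` for every `k ∈ K`. -/
def atBatch [DecidableEq S] (M : S × ℕ → Option ℕ) (K : Finset (S × ℕ)) (j : ℕ) :
    S × ℕ → Option ℕ :=
  fun p => if p ∈ K then some j else M p

/-- Big-step semantics (with resulting memoization table and produced run) of the
memoized backtracking matching algorithm `Memo-at` for at-NFAs:
`MemoAtRun A0 w A q i M M' r s` means the call `Memo-at^M_{A0,A,w}(q, i)` (with the
whole automaton `A0` and current sub-automaton `A`) terminates with result `r`, final
memoization table `M'`, and produces the run `s`. -/
inductive MemoAtRun [DecidableEq S] (A0 : SubNFA Sigma S) (w : List Sigma) :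
    SubNFA Sigma S → S → ℕ → (S × ℕ → Option ℕ) → (S × ℕ → Option ℕ) →
    AtResult S → List (AtRunElem S) → Prop where
  | memoHit {A : SubNFA Sigma S} {q : S} {i j : ℕ} {M : S × ℕ → Option ℕ} :
      M (q, i) = some j →
      MemoAtRun A0 w A q i M M (.failure j) [.memo q i, .fail j]
  | accept {A : SubNFA Sigma S} {q : S} {i : ℕ} {M : S × ℕ → Option ℕ} :
      M (q, i) = none → q ∈ A.F →
      MemoAtRun A0 w A q i M M (.successAt i {(q, i)}) [.call q i, .succ i]
  | eps {A : SubNFA Sigma S} {q q' : S} {i : ℕ} {M M' : S × ℕ → Option ℕ}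
      {r : AtResult S} {s : List (AtRunElem S)} :
      M (q, i) = none → q ∉ A.F → A.T q = SubTrans.eps q' →
      MemoAtRun A0 w A q' i M M' r s →
      MemoAtRun A0 w A q i M (atRecord M' q i r) (atFinal q i r)
        (.call q i :: s ++ [r.elem])
  | branchNoBT {A : SubNFA Sigma S} {q q' q'' : S} {i : ℕ} {M M' : S × ℕ → Option ℕ}
      {r : AtResult S} {s : List (AtRunElem S)} :
      M (q, i) = none → q ∉ A.F → A.T q = SubTrans.branch q' q'' →
      MemoAtRun A0 w A q' i M M' r s →
      (∀ j, r = AtResult.failure j → j ≠ A0.nu q) →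
      MemoAtRun A0 w A q i M (atRecord M' q i r) (atFinal q i r)
        (.call q i :: s ++ [r.elem])
  | branchBTSucc {A : SubNFA Sigma S} {q q' q'' : S} {i i'' : ℕ} {K : Finset (S × ℕ)}
      {M M1 M2 : S × ℕ → Option ℕ} {s1 s2 : List (AtRunElem S)} :
      M (q, i) = none → q ∉ A.F → A.T q = SubTrans.branch q' q'' →
      MemoAtRun A0 w A q' i M M1 (.failure (A0.nu q)) s1 →
      MemoAtRun A0 w A q'' i M1 M2 (.successAt i'' K) s2 →
      MemoAtRun A0 w A q i M M2 (atFinal q i (.successAt i'' K))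
        (.call q i :: s1 ++ s2 ++ [AtRunElem.succ i''])
  | branchBTFail {A : SubNFA Sigma S} {q q' q'' : S} {i j' : ℕ}
      {M M1 M2 : S × ℕ → Option ℕ} {s1 s2 : List (AtRunElem S)} :
      M (q, i) = none → q ∉ A.F → A.T q = SubTrans.branch q' q'' →
      MemoAtRun A0 w A q' i M M1 (.failure (A0.nu q)) s1 →
      MemoAtRun A0 w A q'' i M1 M2 (.failure j') s2 →
      MemoAtRun A0 w A q i M (atRecord M2 q i (.failure (min (A0.nu q) j')))
        (.failure (min (A0.nu q) j'))
        (.call q i :: s1 ++ s2 ++ [AtRunElem.fail (min (A0.nu q) j')])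
  | charSucc {A : SubNFA Sigma S} {q q' : S} {σ : Sigma} {i : ℕ}
      {M M' : S × ℕ → Option ℕ} {r : AtResult S} {s : List (AtRunElem S)} :
      M (q, i) = none → q ∉ A.F → A.T q = SubTrans.char σ q' →
      w[i]? = some σ →
      MemoAtRun A0 w A q' (i + 1) M M' r s →
      MemoAtRun A0 w A q i M (atRecord M' q i r) (atFinal q i r)
        (.call q i :: s ++ [r.elem])
  | charFail {A : SubNFA Sigma S} {q q' : S} {σ : Sigma} {i : ℕ}
      {M : S × ℕ → Option ℕ} :
      M (q, i) = none → q ∉ A.F → A.T q = SubTrans.char σ q' →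
      w[i]? ≠ some σ →
      MemoAtRun A0 w A q i M (atRecord M q i (.failure (A0.nu q)))
        (.failure (A0.nu q)) [.call q i, .fail (A0.nu q)]
  | subSuccSucc {A A' : SubNFA Sigma S} {q q' : S} {i i' i'' : ℕ}
      {K' K'' : Finset (S × ℕ)} {M M1 M2 : S × ℕ → Option ℕ}
      {s1 s2 : List (AtRunElem S)} :
      M (q, i) = none → q ∉ A.F → A.T q = SubTrans.sub Kind.at A' q' →
      MemoAtRun A0 w A' A'.q0 i M M1 (.successAt i' K') s1 →
      MemoAtRun A0 w A q' i' M1 M2 (.successAt i'' K'') s2 →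
      MemoAtRun A0 w A q i M M2 (atFinal q i (.successAt i'' (K' ∪ K'')))
        (.call q i :: s1 ++ s2 ++ [AtRunElem.succ i''])
  | subSuccFail {A A' : SubNFA Sigma S} {q q' : S} {i i' j : ℕ} {K' : Finset (S × ℕ)}
      {M M1 M2 : S × ℕ → Option ℕ} {s1 s2 : List (AtRunElem S)} :
      M (q, i) = none → q ∉ A.F → A.T q = SubTrans.sub Kind.at A' q' →
      MemoAtRun A0 w A' A'.q0 i M M1 (.successAt i' K') s1 →
      MemoAtRun A0 w A q' i' M1 M2 (.failure j) s2 →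
      MemoAtRun A0 w A q i M (atRecord (atBatch M2 K' j) q i (.failure j)) (.failure j)
        (.call q i :: s1 ++ s2 ++ [AtRunElem.fail j])
  | subFailHigh {A A' : SubNFA Sigma S} {q q' : S} {i j : ℕ}
      {M M1 : S × ℕ → Option ℕ} {s1 : List (AtRunElem S)} :
      M (q, i) = none → q ∉ A.F → A.T q = SubTrans.sub Kind.at A' q' →
      MemoAtRun A0 w A' A'.q0 i M M1 (.failure j) s1 →
      A0.nu q < j →
      MemoAtRun A0 w A q i M (atRecord M1 q i (.failure (A0.nu q)))
        (.failure (A0.nu q)) (.call q i :: s1 ++ [AtRunElem.fail (A0.nu q)])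
  | subFailLow {A A' : SubNFA Sigma S} {q q' : S} {i j : ℕ}
      {M M1 : S × ℕ → Option ℕ} {s1 : List (AtRunElem S)} :
      M (q, i) = none → q ∉ A.F → A.T q = SubTrans.sub Kind.at A' q' →
      MemoAtRun A0 w A' A'.q0 i M M1 (.failure j) s1 →
      j ≤ A0.nu q →
      MemoAtRun A0 w A q i M (atRecord M1 q i (.failure j)) (.failure j)
        (.call q i :: s1 ++ [AtRunElem.fail j])

/-! ## The combined algorithm `Memo-(la,at)` -/

/-- Values of the memoization table of `Memo-(la,at)`: `Success` or `Failure(j)`. -/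
inductive LaAtVal : Type where
  | success : LaAtVal
  | failure : ℕ → LaAtVal

/-- Results of `Memo-(la,at)`: `SuccessAt(i', K)`, bare `Success`, or `Failure(j)`. -/
inductive LaAtResult (S : Type) : Type where
  | successAt : ℕ → Finset (S × ℕ) → LaAtResult S
  | success : LaAtResult S
  | failure : ℕ → LaAtResult S

def LaAtVal.toResult {S : Type} : LaAtVal → LaAtResult S
  | .success => .success
  | .failure j => .failure j

/-- `f`, converting results of `Memo-(la,at)` to results of `Match-(la,at)`
(undefined on the bare value `Success`). -/
def LaAtResult.toResult? {S : Type} : LaAtResult S → Option Result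
  | .successAt i _ => some (.successAt i)
  | .success => none
  | .failure _ => some .failure

def laAtFinal [DecidableEq S] (q : S) (i : ℕ) : LaAtResult S → LaAtResult S
  | .successAt i' K => .successAt i' (insert (q, i) K)
  | r => r

def laAtRecord [DecidableEq S] (M : S × ℕ → Option LaAtVal) (q : S) (i : ℕ) :
    LaAtResult S → (S × ℕ → Option LaAtVal)
  | .successAt _ _ => M
  | .success => fun p => if p = (q, i) then some LaAtVal.success else M p
  | .failure j => fun p => if p = (q, i) then some (LaAtVal.failure j) else M p

def laAtBatch [DecidableEq S] (M : S × ℕ → Option LaAtVal) (K : Finset (S × ℕ))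
    (v : LaAtVal) : S × ℕ → Option LaAtVal :=
  fun p => if p ∈ K then some v else M p

/-- Big-step semantics (with resulting memoization table and the number of recursive
calls made) of the combined memoized backtracking matching algorithm `Memo-(la,at)`:
`MemoLaAtRun w A0 A q i M M' r n` means the call `Memo-(la,at)^M_{A0,A,w}(q, i)`
terminates with result `r`, final memoization table `M'`, making `n` calls in total.
On a positive look-ahead transition, the sub-automaton becomes the new whole automaton
(so nesting depths of atomic grouping are reset by look-around operators). -/
inductive MemoLaAtRun [DecidableEq S] (w : List Sigma) :
    SubNFA Sigma S → SubNFA Sigma S → S → ℕ →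
    (S × ℕ → Option LaAtVal) → (S × ℕ → Option LaAtVal) → LaAtResult S → ℕ → Prop where
  | memoHit {A0 A : SubNFA Sigma S} {q : S} {i : ℕ} {M : S × ℕ → Option LaAtVal}
      {v : LaAtVal} :
      M (q, i) = some v →
      MemoLaAtRun w A0 A q i M M v.toResult 1
  | accept {A0 A : SubNFA Sigma S} {q : S} {i : ℕ} {M : S × ℕ → Option LaAtVal} :
      M (q, i) = none → q ∈ A.F →
      MemoLaAtRun w A0 A q i M M (.successAt i {(q, i)}) 1
  | eps {A0 A : SubNFA Sigma S} {q q' : S} {i : ℕ} {M M' : S × ℕ → Option LaAtVal}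
      {r : LaAtResult S} {n : ℕ} :
      M (q, i) = none → q ∉ A.F → A.T q = SubTrans.eps q' →
      MemoLaAtRun w A0 A q' i M M' r n →
      MemoLaAtRun w A0 A q i M (laAtRecord M' q i (laAtFinal q i r)) (laAtFinal q i r)
        (n + 1)
  | branchNoBT {A0 A : SubNFA Sigma S} {q q' q'' : S} {i : ℕ}
      {M M' : S × ℕ → Option LaAtVal} {r : LaAtResult S} {n : ℕ} :
      M (q, i) = none → q ∉ A.F → A.T q = SubTrans.branch q' q'' →
      MemoLaAtRun w A0 A q' i M M' r n →
      (∀ j, r = LaAtResult.failure j → j ≠ A0.nu q) →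
      MemoLaAtRun w A0 A q i M (laAtRecord M' q i (laAtFinal q i r)) (laAtFinal q i r)
        (n + 1)
  | branchBTFail {A0 A : SubNFA Sigma S} {q q' q'' : S} {i j' : ℕ}
      {M M1 M2 : S × ℕ → Option LaAtVal} {n1 n2 : ℕ} :
      M (q, i) = none → q ∉ A.F → A.T q = SubTrans.branch q' q'' →
      MemoLaAtRun w A0 A q' i M M1 (.failure (A0.nu q)) n1 →
      MemoLaAtRun w A0 A q'' i M1 M2 (.failure j') n2 →
      MemoLaAtRun w A0 A q i M
        (laAtRecord M2 q i (.failure (min (A0.nu q) j')))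
        (.failure (min (A0.nu q) j')) (n1 + n2 + 1)
  | branchBTOther {A0 A : SubNFA Sigma S} {q q' q'' : S} {i : ℕ}
      {M M1 M2 : S × ℕ → Option LaAtVal} {r : LaAtResult S} {n1 n2 : ℕ} :
      M (q, i) = none → q ∉ A.F → A.T q = SubTrans.branch q' q'' →
      MemoLaAtRun w A0 A q' i M M1 (.failure (A0.nu q)) n1 →
      MemoLaAtRun w A0 A q'' i M1 M2 r n2 →
      (∀ j, r ≠ LaAtResult.failure j) →
      MemoLaAtRun w A0 A q i M (laAtRecord M2 q i (laAtFinal q i r)) (laAtFinal q i r)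
        (n1 + n2 + 1)
  | charSucc {A0 A : SubNFA Sigma S} {q q' : S} {σ : Sigma} {i : ℕ}
      {M M' : S × ℕ → Option LaAtVal} {r : LaAtResult S} {n : ℕ} :
      M (q, i) = none → q ∉ A.F → A.T q = SubTrans.char σ q' →
      w[i]? = some σ →
      MemoLaAtRun w A0 A q' (i + 1) M M' r n →
      MemoLaAtRun w A0 A q i M (laAtRecord M' q i (laAtFinal q i r)) (laAtFinal q i r)
        (n + 1)
  | charFail {A0 A : SubNFA Sigma S} {q q' : S} {σ : Sigma} {i : ℕ}
      {M : S × ℕ → Option LaAtVal} :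
      M (q, i) = none → q ∉ A.F → A.T q = SubTrans.char σ q' →
      w[i]? ≠ some σ →
      MemoLaAtRun w A0 A q i M (laAtRecord M q i (.failure (A0.nu q)))
        (.failure (A0.nu q)) 1
  | plaSuccAt {A0 A A' : SubNFA Sigma S} {q q' : S} {i i' : ℕ} {K' : Finset (S × ℕ)}
      {M M1 M2 : S × ℕ → Option LaAtVal} {r : LaAtResult S} {n1 n2 : ℕ} :
      M (q, i) = none → q ∉ A.F → A.T q = SubTrans.sub Kind.pla A' q' →
      MemoLaAtRun w A' A' A'.q0 i M M1 (.successAt i' K') n1 →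
      MemoLaAtRun w A0 A q' i (laAtBatch M1 K' LaAtVal.success) M2 r n2 →
      MemoLaAtRun w A0 A q i M (laAtRecord M2 q i (laAtFinal q i r)) (laAtFinal q i r)
        (n1 + n2 + 1)
  | plaBare {A0 A A' : SubNFA Sigma S} {q q' : S} {i : ℕ}
      {M M1 M2 : S × ℕ → Option LaAtVal} {r : LaAtResult S} {n1 n2 : ℕ} :
      M (q, i) = none → q ∉ A.F → A.T q = SubTrans.sub Kind.pla A' q' →
      MemoLaAtRun w A' A' A'.q0 i M M1 .success n1 →
      MemoLaAtRun w A0 A q' i M1 M2 r n2 →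
      MemoLaAtRun w A0 A q i M (laAtRecord M2 q i (laAtFinal q i r)) (laAtFinal q i r)
        (n1 + n2 + 1)
  | plaFail {A0 A A' : SubNFA Sigma S} {q q' : S} {i j : ℕ}
      {M M1 : S × ℕ → Option LaAtVal} {n1 : ℕ} :
      M (q, i) = none → q ∉ A.F → A.T q = SubTrans.sub Kind.pla A' q' →
      MemoLaAtRun w A' A' A'.q0 i M M1 (.failure j) n1 →
      MemoLaAtRun w A0 A q i M (laAtRecord M1 q i (.failure (A0.nu q)))
        (.failure (A0.nu q)) (n1 + 1)
  | atSuccSucc {A0 A A' : SubNFA Sigma S} {q q' : S} {i i' i'' : ℕ}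
      {K' K'' : Finset (S × ℕ)} {M M1 M2 : S × ℕ → Option LaAtVal} {n1 n2 : ℕ} :
      M (q, i) = none → q ∉ A.F → A.T q = SubTrans.sub Kind.at A' q' →
      MemoLaAtRun w A0 A' A'.q0 i M M1 (.successAt i' K') n1 →
      MemoLaAtRun w A0 A q' i' M1 M2 (.successAt i'' K'') n2 →
      MemoLaAtRun w A0 A q i M M2
        (laAtFinal q i (.successAt i'' (K' ∪ K''))) (n1 + n2 + 1)
  | atSuccBare {A0 A A' : SubNFA Sigma S} {q q' : S} {i i' : ℕ} {K' : Finset (S × ℕ)}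
      {M M1 M2 : S × ℕ → Option LaAtVal} {n1 n2 : ℕ} :
      M (q, i) = none → q ∉ A.F → A.T q = SubTrans.sub Kind.at A' q' →
      MemoLaAtRun w A0 A' A'.q0 i M M1 (.successAt i' K') n1 →
      MemoLaAtRun w A0 A q' i' M1 M2 .success n2 →
      MemoLaAtRun w A0 A q i M
        (laAtRecord (laAtBatch M2 K' LaAtVal.success) q i .success) .success
        (n1 + n2 + 1)
  | atSuccFail {A0 A A' : SubNFA Sigma S} {q q' : S} {i i' j : ℕ} {K' : Finset (S × ℕ)}
      {M M1 M2 : S × ℕ → Option LaAtVal} {n1 n2 : ℕ} :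
      M (q, i) = none → q ∉ A.F → A.T q = SubTrans.sub Kind.at A' q' →
      MemoLaAtRun w A0 A' A'.q0 i M M1 (.successAt i' K') n1 →
      MemoLaAtRun w A0 A q' i' M1 M2 (.failure j) n2 →
      MemoLaAtRun w A0 A q i M
        (laAtRecord (laAtBatch M2 K' (LaAtVal.failure j)) q i (.failure j))
        (.failure j) (n1 + n2 + 1)
  | atBare {A0 A A' : SubNFA Sigma S} {q q' : S} {i : ℕ}
      {M M1 : S × ℕ → Option LaAtVal} {n1 : ℕ} :
      M (q, i) = none → q ∉ A.F → A.T q = SubTrans.sub Kind.at A' q' →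
      MemoLaAtRun w A0 A' A'.q0 i M M1 .success n1 →
      MemoLaAtRun w A0 A q i M (laAtRecord M1 q i .success) .success (n1 + 1)
  | atFailHigh {A0 A A' : SubNFA Sigma S} {q q' : S} {i j : ℕ}
      {M M1 : S × ℕ → Option LaAtVal} {n1 : ℕ} :
      M (q, i) = none → q ∉ A.F → A.T q = SubTrans.sub Kind.at A' q' →
      MemoLaAtRun w A0 A' A'.q0 i M M1 (.failure j) n1 →
      A0.nu q < j →
      MemoLaAtRun w A0 A q i M (laAtRecord M1 q i (.failure (A0.nu q)))
        (.failure (A0.nu q)) (n1 + 1)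
  | atFailLow {A0 A A' : SubNFA Sigma S} {q q' : S} {i j : ℕ}
      {M M1 : S × ℕ → Option LaAtVal} {n1 : ℕ} :
      M (q, i) = none → q ∉ A.F → A.T q = SubTrans.sub Kind.at A' q' →
      MemoLaAtRun w A0 A' A'.q0 i M M1 (.failure j) n1 →
      j ≤ A0.nu q →
      MemoLaAtRun w A0 A q i M (laAtRecord M1 q i (.failure j)) (.failure j) (n1 + 1)

/-!
`Match` succeeds on an atomic group as soon as the group itself does, but `Memo-(la,at)`
records an outcome for a state inside a group only once it is known what happens after the
group. The values of its table therefore describe a call together with everything pending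
around it: the stack of continuations of the enclosing atomic groups, up to the innermost
look-around. `Failure(j)` means that running the call and then this stack fails in the frame
that has `j` frames below it, `Success` that the whole stack is run successfully, which is
only ever recorded inside a look-around. The keys delayed in `SuccessAt(i', K)` belong to
calls whose frames have already succeeded, so each of them inherits the outcome of the
frames that remain. As state sets are disjoint, a state determines the sub-automaton it lies
in and hence this stack, and its nesting depth `ν` is the length of the stack; hence table
values keep their meaning when they are looked up by a later call.

Every call of `Memo-(la,at)` preserves this meaning of the table. Conversely, a terminating
run of `Match` yields one of `Memo-(la,at)` by induction: whenever the latter proceeds to a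
further call, soundness and determinism show that `Match` makes that call too.
-/

/-- `Match-(la,at)_{A,w}(q, i)` terminates with result `r`. -/
def Matches (w : List Sigma) (A : SubNFA Sigma S) (q : S) (i : ℕ) (r : Result) : Prop :=
  ∃ s, LAMatchRun w A q i r s

theorem LAMatchRun.result_unique {w : List Sigma} {A : SubNFA Sigma S} {q : S} {i : ℕ}
    {r r' : Result} {s s' : List (LaRunElem S)} (h : LAMatchRun w A q i r s)
    (h' : LAMatchRun w A q i r' s') : r = r' := by
  induction h generalizing r' s' with
  | accept => cases h' <;> simp_all
  | eps hF hT _ ih => cases h' <;> grind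
  | branchSucc hF hT _ ih => cases h' <;> grind
  | branchFail hF hT _ _ ih₁ ih₂ => cases h' <;> grind
  | charSucc hF hT hw _ ih => cases h' <;> grind
  | charFail hF hT hw => cases h' <;> grind
  | plaSucc hF hT _ _ ih₁ ih₂ => cases h' <;> grind
  | plaFail hF hT _ ih => cases h' <;> grind
  | atSucc hF hT _ _ ih₁ ih₂ => cases h' <;> grind
  | atFail hF hT _ ih => cases h' <;> grind

theorem Matches.unique {w : List Sigma} {A : SubNFA Sigma S} {q : S} {i : ℕ} {r r' : Result} :
    Matches w A q i r → Matches w A q i r' → r = r' :=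
  fun ⟨_, h⟩ ⟨_, h'⟩ => h.result_unique h'

section MatchesTransitions

variable {w : List Sigma} {A B : SubNFA Sigma S} {q q' q'' : S} {σ : Sigma} {i i' : ℕ}
  {r : Result}

theorem Matches.accept (hF : q ∈ A.F) : Matches w A q i (.successAt i) :=
  ⟨_, .accept hF⟩

theorem Matches.eps (hF : q ∉ A.F) (hT : A.T q = .eps q') :
    Matches w A q' i r → Matches w A q i r :=
  fun ⟨_, h⟩ => ⟨_, .eps hF hT h⟩

theorem Matches.branchSucc (hF : q ∉ A.F) (hT : A.T q = .branch q' q'') :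
    Matches w A q' i (.successAt i') → Matches w A q i (.successAt i') :=
  fun ⟨_, h⟩ => ⟨_, .branchSucc hF hT h⟩

theorem Matches.branchFail (hF : q ∉ A.F) (hT : A.T q = .branch q' q'') :
    Matches w A q' i .failure → Matches w A q'' i r → Matches w A q i r :=
  fun ⟨_, h⟩ ⟨_, h'⟩ => ⟨_, .branchFail hF hT h h'⟩

theorem Matches.charSucc (hF : q ∉ A.F) (hT : A.T q = .char σ q') (hw : w[i]? = some σ) :
    Matches w A q' (i + 1) r → Matches w A q i r :=
  fun ⟨_, h⟩ => ⟨_, .charSucc hF hT hw h⟩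

theorem Matches.charFail (hF : q ∉ A.F) (hT : A.T q = .char σ q') (hw : w[i]? ≠ some σ) :
    Matches w A q i .failure :=
  ⟨_, .charFail hF hT hw⟩

theorem Matches.plaSucc (hF : q ∉ A.F) (hT : A.T q = .sub .pla B q') :
    Matches w B B.q0 i (.successAt i') → Matches w A q' i r → Matches w A q i r :=
  fun ⟨_, h⟩ ⟨_, h'⟩ => ⟨_, .plaSucc hF hT h h'⟩

theorem Matches.plaFail (hF : q ∉ A.F) (hT : A.T q = .sub .pla B q') :
    Matches w B B.q0 i .failure → Matches w A q i .failure :=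
  fun ⟨_, h⟩ => ⟨_, .plaFail hF hT h⟩

theorem Matches.atSucc (hF : q ∉ A.F) (hT : A.T q = .sub .at B q') :
    Matches w B B.q0 i (.successAt i') → Matches w A q' i' r → Matches w A q i r :=
  fun ⟨_, h⟩ ⟨_, h'⟩ => ⟨_, .atSucc hF hT h h'⟩

theorem Matches.atFail (hF : q ∉ A.F) (hT : A.T q = .sub .at B q') :
    Matches w B B.q0 i .failure → Matches w A q i .failure :=
  fun ⟨_, h⟩ => ⟨_, .atFail hF hT h⟩

end MatchesTransitions

/-! ## Places of sub-automata -/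

theorem SubNFA.subInduction {motive : SubNFA Sigma S → Prop}
    (ind : ∀ A : SubNFA Sigma S, (∀ q k B q', A.T q = .sub k B q' → motive B) → motive A)
    (A : SubNFA Sigma S) : motive A :=
  SubNFA.rec (motive_1 := motive) (motive_2 := fun t => ∀ k B q', t = .sub k B q' → motive B)
    (fun _ _ _ _ ih => ind _ fun q => ih q) nofun nofun nofun
    (fun _ _ _ ih _ _ _ h => by cases h; exact ih) A

theorem SubNFA.compsD_eq (A : SubNFA Sigma S) :
    A.compsD = (A, 0) :: A.Q.flatMap fun q => (A.T q).subCompsD := by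
  cases A
  rfl

theorem SubNFA.comps_eq (A : SubNFA Sigma S) :
    A.comps = A :: A.Q.flatMap fun q => (A.T q).subCompsD.map Prod.fst := by
  simp [SubNFA.comps, A.compsD_eq, List.map_flatMap]

theorem SubTrans.map_fst_subCompsD_sub (k : Kind) (B : SubNFA Sigma S) (q : S) :
    (SubTrans.sub k B q).subCompsD.map Prod.fst = B.comps := by
  simp [SubTrans.subCompsD, SubNFA.comps, Function.comp_def]

theorem SubNFA.subCompsD_sublist {A B : SubNFA Sigma S} {q q' : S} {k : Kind}
    (hq : q ∈ A.Q) (hT : A.T q = .sub k B q') :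
    (SubTrans.sub k B q').subCompsD.Sublist A.compsD := by
  rw [← hT, A.compsD_eq, List.flatMap_def]
  exact .cons _ (List.sublist_flatten_of_mem (List.mem_map.2 ⟨q, hq, rfl⟩))

/-- A position in the nesting of sub-automata: the sub-automaton `aut` together with the
innermost enclosing look-around sub-automaton `root` (or the whole automaton), the stack of
pending continuations of the atomic groups between `root` and `aut`, innermost first, and
whether `root` is a look-around sub-automaton. -/
structure Place (Sigma S : Type) where
  root : SubNFA Sigma S
  aut : SubNFA Sigma S
  stack : List (SubNFA Sigma S × S)
  inLookaround : Bool

/-- The place of the whole automaton. -/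
def Place.top (A : SubNFA Sigma S) : Place Sigma S := ⟨A, A, [], false⟩

/-- The place reached by following a transition `Sub(k, B, q')`; look-arounds reset the
stack, as they reset nesting depths. -/
def Place.enter (P : Place Sigma S) : Kind → SubNFA Sigma S → S → Place Sigma S
  | .at, B, q' => ⟨P.root, B, (P.aut, q') :: P.stack, P.inLookaround⟩
  | _, B, _ => ⟨B, B, [], true⟩

/-- One step inwards in the nesting of sub-automata. -/
inductive Place.Enters : Place Sigma S → Place Sigma S → Prop
  | intro {P : Place Sigma S} {q q' : S} {k : Kind} {B : SubNFA Sigma S} :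
      q ∈ P.aut.Q → P.aut.T q = .sub k B q' → Place.Enters P (P.enter k B q')

/-- `P` is the place of one of the sub-automata of `A` (or of `A` itself). -/
def SubNFA.IsPlace (A : SubNFA Sigma S) (P : Place Sigma S) : Prop :=
  Relation.ReflTransGen Place.Enters (Place.top A) P

theorem Place.aut_enter (P : Place Sigma S) (k : Kind) (B : SubNFA Sigma S) (q : S) :
    (P.enter k B q).aut = B := by
  cases k <;> rfl

theorem SubNFA.IsPlace.compsD_sublist_root {A : SubNFA Sigma S} {P : Place Sigma S}
    (hP : A.IsPlace P) :
    (P.aut.compsD.map fun p => (p.1, p.2 + P.stack.length)).Sublist P.root.compsD := by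
  induction hP with
  | refl => simp [Place.top]
  | @tail P _ _ hstep ih =>
    cases hstep with
    | @intro q q' k B hq hT =>
      cases k
      case pla | nla | plb | nlb => simp [Place.enter]
      refine .trans ?_ ih
      simpa [SubTrans.subCompsD, Place.enter, Function.comp_def, add_assoc, add_comm 1]
        using (SubNFA.subCompsD_sublist hq hT).map fun p => (p.1, p.2 + P.stack.length)

theorem SubNFA.IsPlace.root_comps_sublist {A : SubNFA Sigma S} {P : Place Sigma S}
    (hP : A.IsPlace P) : P.root.comps.Sublist A.comps := by
  induction hP with
  | refl => exact .refl _
  | @tail P _ hP hstep ih =>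
    cases hstep with
    | @intro q q' k B hq hT =>
      have haut : P.aut.comps.Sublist P.root.comps := by
        simpa [SubNFA.comps, Function.comp_def] using
          (SubNFA.IsPlace.compsD_sublist_root hP).map Prod.fst
      have hB : B.comps.Sublist P.aut.comps := by
        rw [← SubTrans.map_fst_subCompsD_sub k B q']
        exact (SubNFA.subCompsD_sublist hq hT).map Prod.fst
      cases k
      case pla | nla | plb | nlb => exact (hB.trans haut).trans ih
      exact ih

theorem SubNFA.IsPlace.mem_compsD {A : SubNFA Sigma S} {P : Place Sigma S}
    (hP : A.IsPlace P) : (P.aut, P.stack.length) ∈ P.root.compsD :=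
  hP.compsD_sublist_root.subset (by simp [P.aut.compsD_eq])

theorem SubNFA.IsPlace.aut_mem_comps {A : SubNFA Sigma S} {P : Place Sigma S}
    (hP : A.IsPlace P) : P.aut ∈ A.comps :=
  hP.root_comps_sublist.subset (List.mem_map_of_mem (f := Prod.fst) hP.mem_compsD)

theorem SubNFA.nu_eq_of_mem_compsD [DecidableEq S] {A B : SubNFA Sigma S} {d : ℕ} {q : S}
    (hA : A.allStates.Nodup) (hB : (B, d) ∈ A.compsD) (hq : q ∈ B.Q) : A.nu q = d := by
  obtain ⟨l₁, l₂, hl⟩ := List.append_of_mem hB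
  rw [SubNFA.allStates, SubNFA.comps, hl, List.nodup_flatMap] at hA
  have hdisj := hA.2
  simp only [List.map_append, List.map_cons, List.pairwise_append, List.pairwise_cons,
    Function.onFun] at hdisj
  have hzero {l : List (SubNFA Sigma S × ℕ)} (h : ∀ p ∈ l, q ∉ p.1.Q) :
      (l.map fun p => if q ∈ p.1.Q then p.2 else 0).sum = 0 :=
    List.sum_eq_zero (List.forall_mem_map.2 fun p hp => if_neg (h p hp))
  have h₁ : ∀ p ∈ l₁, q ∉ p.1.Q := fun p hp hqp =>
    hdisj.2.2 p.1 (List.mem_map_of_mem hp) B (by simp) hqp hq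
  have h₂ : ∀ p ∈ l₂, q ∉ p.1.Q := fun p hp =>
    hdisj.2.1.1 p.1 (List.mem_map_of_mem hp) hq
  simp [SubNFA.nu, hl, hzero h₁, hzero h₂, hq]

theorem SubNFA.IsPlace.nu_eq [DecidableEq S] {A : SubNFA Sigma S} {P : Place Sigma S} {q : S}
    (hP : A.IsPlace P) (hA : A.allStates.Nodup) (hq : q ∈ P.aut.Q) :
    P.root.nu q = P.stack.length :=
  SubNFA.nu_eq_of_mem_compsD
    (hA.sublist (hP.root_comps_sublist.flatMap _)) hP.mem_compsD hq

theorem Place.exists_list_reachable (P : Place Sigma S) :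
    ∃ l : List (Place Sigma S), l.map Place.aut = P.aut.comps ∧
      ∀ P', Relation.ReflTransGen Place.Enters P P' → P' ∈ l := by
  obtain ⟨A, hA⟩ : ∃ A, P.aut = A := ⟨_, rfl⟩
  induction A using SubNFA.subInduction generalizing P with
  | ind A ih =>
    subst hA
    have hsub (q : S) : ∃ l : List (Place Sigma S),
        l.map Place.aut = (P.aut.T q).subCompsD.map Prod.fst ∧
          ∀ k B q', P.aut.T q = .sub k B q' →
            ∀ P', Relation.ReflTransGen Place.Enters (P.enter k B q') P' → P' ∈ l := by
      cases hT : P.aut.T q with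
      | sub k B q' =>
        obtain ⟨l, hl, hmem⟩ := ih q k B q' hT (P.enter k B q') (P.aut_enter k B q')
        refine ⟨l, ?_, ?_⟩
        · rw [hl, P.aut_enter, SubTrans.map_fst_subCompsD_sub]
        · rintro _ _ _ ⟨⟩
          exact hmem
      | _ => exact ⟨[], by simp [SubTrans.subCompsD], nofun⟩
    choose l hl hmem using hsub
    refine ⟨P :: P.aut.Q.flatMap l, ?_, fun P' hP' => ?_⟩
    · simp [P.aut.comps_eq, List.map_flatMap, hl]
    · rcases hP'.cases_head with rfl | ⟨_, ⟨hq, hT⟩, hP'⟩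
      · simp
      · exact List.mem_cons_of_mem _ (List.mem_flatMap.2 ⟨_, hq, hmem _ _ _ _ hT _ hP'⟩)

theorem eq_of_nodup_flatMap {β γ : Type} {f : β → List γ} {l : List β}
    (h : (l.flatMap f).Nodup) {a b : β} (ha : a ∈ l) (hb : b ∈ l) {x : γ}
    (hxa : x ∈ f a) (hxb : x ∈ f b) : a = b := by
  by_contra hab
  have : Std.Symm (Function.onFun List.Disjoint f) := ⟨fun _ _ => List.Disjoint.symm⟩
  exact (List.nodup_flatMap.1 h).2.forall ha hb hab hxa hxb

theorem SubNFA.IsPlace.eq_of_mem {A : SubNFA Sigma S} {P P' : Place Sigma S} {q : S}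
    (hP : A.IsPlace P) (hP' : A.IsPlace P') (hA : A.allStates.Nodup)
    (hq : q ∈ P.aut.Q) (hq' : q ∈ P'.aut.Q) : P = P' := by
  obtain ⟨l, hl, hmem⟩ := (Place.top A).exists_list_reachable
  have hnodup : (l.flatMap fun P => P.aut.Q).Nodup := by
    rwa [← List.flatMap_map, hl]
  exact eq_of_nodup_flatMap hnodup (hmem P hP) (hmem P' hP') hq hq'

/-- `q` is a top-level state of the sub-automaton of `A` at the place `P`. -/
structure SubNFA.StateAt (A : SubNFA Sigma S) (P : Place Sigma S) (q : S) : Prop where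
  isPlace : A.IsPlace P
  mem : q ∈ P.aut.Q

/-- The states of the surrounding automaton to which a transition leads. -/
def SubTrans.targets : SubTrans Sigma S → List S
  | .eps q' => [q']
  | .branch q' q'' => [q', q'']
  | .char _ q' => [q']
  | .sub _ _ q' => [q']

theorem SubNFA.LocalOK.target_mem {B : SubNFA Sigma S} {q q' : S} {t : SubTrans Sigma S}
    (hB : B.LocalOK) (hq : q ∈ B.Q) (hF : q ∉ B.F) (hT : B.T q = t) (ht : q' ∈ t.targets) :
    q' ∈ B.Q := by
  have h := hB.2.2 q hq hF
  rw [hT] at h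
  cases t <;> grind [SubTrans.targets]

theorem SubNFA.WF.q0_mem {A : SubNFA Sigma S} (hA : A.WF) : A.q0 ∈ A.Q :=
  (hA.1 A (by simp [A.comps_eq])).1

section StateAt

variable {A B : SubNFA Sigma S} {P : Place Sigma S} {q q' : S} {k : Kind}

theorem SubNFA.StateAt.top (hq : q ∈ A.Q) : A.StateAt (Place.top A) q :=
  ⟨.refl, hq⟩

theorem SubNFA.StateAt.localOK (h : A.StateAt P q) (hA : A.WF) : P.aut.LocalOK :=
  hA.1 _ h.isPlace.aut_mem_comps

theorem SubNFA.StateAt.target {t : SubTrans Sigma S} (h : A.StateAt P q) (hA : A.WF)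
    (hF : q ∉ P.aut.F) (hT : P.aut.T q = t) (ht : q' ∈ t.targets) : A.StateAt P q' :=
  ⟨h.isPlace, (h.localOK hA).target_mem h.mem hF hT ht⟩

theorem SubNFA.StateAt.enter (h : A.StateAt P q) (hA : A.WF) (hT : P.aut.T q = .sub k B q') :
    A.StateAt (P.enter k B q') B.q0 := by
  have hplace : A.IsPlace (P.enter k B q') := h.isPlace.tail ⟨h.mem, hT⟩
  have hq0 := (hA.1 _ hplace.aut_mem_comps).1
  rw [P.aut_enter] at hq0
  exact ⟨hplace, by rwa [P.aut_enter]⟩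

theorem SubNFA.StateAt.nu_eq [DecidableEq S] (h : A.StateAt P q) (hA : A.WF) :
    P.root.nu q = P.stack.length :=
  h.isPlace.nu_eq hA.2 h.mem

theorem SubNFA.StateAt.unique {P' : Place Sigma S} (h : A.StateAt P q) (h' : A.StateAt P' q)
    (hA : A.WF) : P = P' :=
  h.isPlace.eq_of_mem h'.isPlace hA.2 h.mem h'.mem

end StateAt

/-! ## The meaning of table values -/

/-- The outcome of running the frames of a stack one after the other, each from the position
where the previous one succeeded: `failure j` if some frame with `j` frames below it fails,
and `success` if all frames succeed. The value `success` only exists within a look-around,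
which is what the flag records. -/
inductive StackOutcome (w : List Sigma) (inLookaround : Bool) :
    List (SubNFA Sigma S × S) → ℕ → LaAtVal → Prop
  | nil {i : ℕ} : inLookaround = true → StackOutcome w inLookaround [] i .success
  | fail {B : SubNFA Sigma S} {q : S} {c : List (SubNFA Sigma S × S)} {i : ℕ} :
      Matches w B q i .failure →
      StackOutcome w inLookaround ((B, q) :: c) i (.failure c.length)
  | succ {B : SubNFA Sigma S} {q : S} {c : List (SubNFA Sigma S × S)} {i m : ℕ}
      {v : LaAtVal} :
      Matches w B q i (.successAt m) → StackOutcome w inLookaround c m v →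
      StackOutcome w inLookaround ((B, q) :: c) i v

section StackOutcome

variable {w : List Sigma} {la : Bool} {c : List (SubNFA Sigma S × S)} {B : SubNFA Sigma S}
  {q q' : S} {i i' : ℕ} {v : LaAtVal}

theorem StackOutcome.lt_length {j : ℕ} (h : StackOutcome w la c i (.failure j)) :
    j < c.length := by
  generalize hv : LaAtVal.failure j = v at h
  induction h with
  | nil => cases hv
  | fail => cases hv; exact Nat.lt_succ_self _
  | succ _ _ ih => exact (ih hv).trans (Nat.lt_succ_self _)

theorem StackOutcome.eq_true_of_success (h : StackOutcome w la c i .success) : la = true := by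
  generalize hv : LaAtVal.success = v at h
  induction h with
  | nil hla => exact hla
  | fail => cases hv
  | succ _ _ ih => exact ih hv

theorem StackOutcome.matches_failure
    (h : StackOutcome w la ((B, q) :: c) i (.failure c.length)) : Matches w B q i .failure := by
  cases h with
  | fail h => exact h
  | succ _ h => exact absurd h.lt_length (lt_irrefl _)

theorem StackOutcome.exists_successAt (h : StackOutcome w la ((B, q) :: c) i v)
    (hv : v ≠ .failure c.length) :
    ∃ m, Matches w B q i (.successAt m) ∧ StackOutcome w la c m v := by
  cases h with
  | fail => exact absurd rfl hv
  | succ h h' => exact ⟨_, h, h'⟩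

theorem StackOutcome.replace_head (h : StackOutcome w la ((B, q') :: c) i' v)
    (hsucc : ∀ m, Matches w B q' i' (.successAt m) → Matches w B q i (.successAt m))
    (hfail : v = .failure c.length → Matches w B q' i' .failure → Matches w B q i .failure) :
    StackOutcome w la ((B, q) :: c) i v := by
  cases h with
  | fail h => exact .fail (hfail rfl h)
  | succ h h' => exact .succ (hsucc _ h) h'

end StackOutcome

/-- The outcome of matching from `q` at the place `P` and then running the continuations
pending at `P`. -/
def Place.Outcome (w : List Sigma) (P : Place Sigma S) (q : S) (i : ℕ) (v : LaAtVal) : Prop :=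
  StackOutcome w P.inLookaround ((P.aut, q) :: P.stack) i v

/-- `v` is a correct table value for the key `key`, wherever its state is located in `A`. -/
def HasOutcome (w : List Sigma) (A : SubNFA Sigma S) (key : S × ℕ) (v : LaAtVal) : Prop :=
  ∃ P, A.StateAt P key.1 ∧ P.Outcome w key.1 key.2 v

/-- All values recorded in the table `M` are correct. -/
def Sound (w : List Sigma) (A : SubNFA Sigma S) (M : S × ℕ → Option LaAtVal) : Prop :=
  ∀ key v, M key = some v → HasOutcome w A key v

/-- Correctness of the result of a call at the place `P`. The keys delayed in a result
`SuccessAt(m, K)` await the outcome of the continuations pending at `P`, run from `m`. -/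
def ResultSound (w : List Sigma) (A : SubNFA Sigma S) (P : Place Sigma S) (q : S) (i : ℕ) :
    LaAtResult S → Prop
  | .successAt m K => Matches w P.aut q i (.successAt m) ∧
      ∀ key ∈ K, ∀ v, StackOutcome w P.inLookaround P.stack m v → HasOutcome w A key v
  | .success => P.Outcome w q i .success
  | .failure j => P.Outcome w q i (.failure j)

/-- Correctness of a call at the place `P` that returns `r` and leaves the table `M`. -/
structure CallSound (w : List Sigma) (A : SubNFA Sigma S) (P : Place Sigma S) (q : S) (i : ℕ)
    (M : S × ℕ → Option LaAtVal) (r : LaAtResult S) : Prop where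
  table : Sound w A M
  result : ResultSound w A P q i r

section Tables

variable {w : List Sigma} {A B : SubNFA Sigma S} {P : Place Sigma S} {q q' : S} {i i' m : ℕ}
  {M : S × ℕ → Option LaAtVal} {K K' : Finset (S × ℕ)} {r : LaAtResult S} {v : LaAtVal}

theorem Sound.empty : Sound w A fun _ => none := nofun

theorem resultSound_toResult : ResultSound w A P q i v.toResult ↔ P.Outcome w q i v := by
  cases v <;> rfl

theorem Place.Outcome.hasOutcome (h : P.Outcome w q i v) (hq : A.StateAt P q) :
    HasOutcome w A (q, i) v :=
  ⟨P, hq, h⟩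

theorem Sound.outcome (hM : Sound w A M) (hA : A.WF) (hq : A.StateAt P q)
    (hv : M (q, i) = some v) : P.Outcome w q i v := by
  obtain ⟨P', hq', h⟩ := hM _ _ hv
  rwa [hq.unique hq' hA]

theorem ResultSound.matches_of_toResult {r' : Result} (h : ResultSound w A P q i r)
    (hP : P.stack = []) (hr : r.toResult? = some r') : Matches w P.aut q i r' := by
  cases r with
  | successAt m K => cases hr; exact h.1
  | success => cases hr
  | failure j =>
    cases hr
    have hj : j = P.stack.length := by simpa [hP] using h.lt_length
    exact StackOutcome.matches_failure (hj ▸ h)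

theorem ResultSound.exists_successAt_of_success (h : ResultSound w A P q i .success) :
    ∃ m, Matches w P.aut q i (.successAt m) :=
  (StackOutcome.exists_successAt h nofun).imp fun _ => And.left

theorem ResultSound.insert_key [DecidableEq S] (h : ResultSound w A P q i (.successAt m K))
    (hq : A.StateAt P q) : ResultSound w A P q i (.successAt m (insert (q, i) K)) := by
  refine ⟨h.1, fun key hkey v hv => ?_⟩
  obtain rfl | hkey := Finset.mem_insert.1 hkey
  · exact Place.Outcome.hasOutcome (.succ h.1 hv) hq
  · exact h.2 key hkey v hv

theorem Sound.batch [DecidableEq S] (hM : Sound w A M) (hK : ∀ key ∈ K, HasOutcome w A key v) :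
    Sound w A (laAtBatch M K v) := by
  intro key v' hv'
  by_cases hkey : key ∈ K
  · obtain rfl : v = v' := by simpa [laAtBatch, hkey] using hv'
    exact hK key hkey
  · exact hM key v' (by simpa [laAtBatch, hkey] using hv')

theorem laAtRecord_toResult [DecidableEq S] :
    laAtRecord M q i v.toResult = laAtBatch M {(q, i)} v := by
  cases v <;> funext p <;> simp [laAtRecord, laAtBatch, LaAtVal.toResult]

theorem Place.Outcome.callSound_record [DecidableEq S] (h : P.Outcome w q i v)
    (hM : Sound w A M) (hq : A.StateAt P q) :
    CallSound w A P q i (laAtRecord M q i v.toResult) v.toResult where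
  table := by
    rw [laAtRecord_toResult]
    exact hM.batch (by simpa using h.hasOutcome hq)
  result := resultSound_toResult.2 h

theorem CallSound.replace [DecidableEq S] (h : CallSound w A P q' i' M r)
    (hq : A.StateAt P q)
    (hsucc : ∀ m, Matches w P.aut q' i' (.successAt m) → Matches w P.aut q i (.successAt m))
    (hfail : r = .failure P.stack.length →
      Matches w P.aut q' i' .failure → Matches w P.aut q i .failure) :
    CallSound w A P q i (laAtRecord M q i (laAtFinal q i r)) (laAtFinal q i r) := by
  obtain ⟨hM, hr⟩ := h
  cases r with
  | successAt m K => exact ⟨hM, ResultSound.insert_key ⟨hsucc m hr.1, hr.2⟩ hq⟩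
  | success => exact Place.Outcome.callSound_record (hr.replace_head hsucc nofun) hM hq
  | failure j =>
    refine Place.Outcome.callSound_record (hr.replace_head hsucc fun hj => hfail ?_) hM hq
    rw [LaAtVal.failure.inj hj]

theorem CallSound.tail [DecidableEq S] (h : CallSound w A P q' i' M r) (hq : A.StateAt P q)
    (hmatch : ∀ {r}, Matches w P.aut q' i' r → Matches w P.aut q i r) :
    CallSound w A P q i (laAtRecord M q i (laAtFinal q i r)) (laAtFinal q i r) :=
  h.replace hq (fun _ => hmatch) fun _ => hmatch

theorem CallSound.of_matches_failure [DecidableEq S] (h : Matches w P.aut q i .failure)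
    (hM : Sound w A M) (hA : A.WF) (hq : A.StateAt P q) :
    CallSound w A P q i (laAtRecord M q i (.failure (P.root.nu q)))
      (.failure (P.root.nu q)) := by
  rw [hq.nu_eq hA]
  exact Place.Outcome.callSound_record (.fail h) hM hq

theorem CallSound.flush_lookaround [DecidableEq S]
    (h : CallSound w A P q i M (.successAt m K)) (hP : P.stack = [])
    (hla : P.inLookaround = true) : Sound w A (laAtBatch M K .success) :=
  h.table.batch fun key hkey => h.result.2 key hkey _ (hP ▸ .nil hla)

theorem CallSound.union_keys [DecidableEq S] (h : CallSound w A P q i M (.successAt m K))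
    (hK' : ∀ key ∈ K', ∀ v, P.Outcome w q i v → HasOutcome w A key v) :
    CallSound w A P q i M (.successAt m (K' ∪ K)) := by
  refine ⟨h.table, h.result.1, fun key hkey v hv => ?_⟩
  obtain hkey | hkey := Finset.mem_union.1 hkey
  · exact hK' key hkey v (.succ h.result.1 hv)
  · exact h.result.2 key hkey v hv

theorem CallSound.flush_keys [DecidableEq S] (h : CallSound w A P q i M v.toResult)
    (hK : ∀ key ∈ K, ∀ v, P.Outcome w q i v → HasOutcome w A key v) :
    CallSound w A P q i (laAtBatch M K v) v.toResult where
  table := h.table.batch fun key hkey => hK key hkey v (resultSound_toResult.1 h.result)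
  result := h.result

theorem CallSound.matches_failure (h : CallSound w A P q i M (.failure P.stack.length)) :
    Matches w P.aut q i .failure :=
  StackOutcome.matches_failure h.result

theorem CallSound.exists_of_enter_at
    (h : CallSound w A (P.enter .at B q') q i M v.toResult)
    (hv : v ≠ .failure (P.stack.length + 1)) :
    ∃ m, Matches w B q i (.successAt m) ∧ CallSound w A P q' m M v.toResult := by
  obtain ⟨m, hm, houtcome⟩ :=
    StackOutcome.exists_successAt (resultSound_toResult.1 h.result) hv
  exact ⟨m, hm, h.table, resultSound_toResult.2 houtcome⟩

end Tables

/-- The contract of a call `(q, i)` at the place `P` that starts with the table `M`, returns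
`r` and leaves the table `M'`. -/
def CallCorrect (w : List Sigma) (A : SubNFA Sigma S) (P : Place Sigma S) (q : S) (i : ℕ)
    (M M' : S × ℕ → Option LaAtVal) (r : LaAtResult S) : Prop :=
  A.StateAt P q → Sound w A M → CallSound w A P q i M' r

section CallCorrect

variable {w : List Sigma} {A B : SubNFA Sigma S} {P : Place Sigma S}
  {q q' q'' : S} {σ : Sigma} {i i' j m : ℕ} {M M₁ M₂ : S × ℕ → Option LaAtVal}
  {K K' : Finset (S × ℕ)} {r : LaAtResult S} {v : LaAtVal}

theorem CallCorrect.memoHit (hA : A.WF) (hv : M (q, i) = some v) :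
    CallCorrect w A P q i M M v.toResult :=
  fun hq hM => ⟨hM, resultSound_toResult.2 (hM.outcome hA hq hv)⟩

theorem CallCorrect.accept (hF : q ∈ P.aut.F) :
    CallCorrect w A P q i M M (.successAt i {(q, i)}) := by
  refine fun hq hM => ⟨hM, .accept hF, fun key hkey v hv => ?_⟩
  rw [Finset.mem_singleton.1 hkey]
  exact Place.Outcome.hasOutcome (.succ (.accept hF) hv) hq

variable [DecidableEq S]

theorem CallCorrect.eps (hA : A.WF) (hF : q ∉ P.aut.F) (hT : P.aut.T q = .eps q')
    (h : CallCorrect w A P q' i M M₁ r) :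
    CallCorrect w A P q i M (laAtRecord M₁ q i (laAtFinal q i r)) (laAtFinal q i r) :=
  fun hq hM => (h (hq.target hA hF hT (.head _)) hM).tail hq (.eps hF hT)

theorem CallCorrect.branchNoBT (hA : A.WF) (hF : q ∉ P.aut.F)
    (hT : P.aut.T q = .branch q' q'') (h : CallCorrect w A P q' i M M₁ r)
    (hne : r ≠ .failure (P.root.nu q)) :
    CallCorrect w A P q i M (laAtRecord M₁ q i (laAtFinal q i r)) (laAtFinal q i r) := by
  intro hq hM
  rw [hq.nu_eq hA] at hne
  exact (h (hq.target hA hF hT (.head _)) hM).replace hq (fun _ => .branchSucc hF hT)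
    fun hr => absurd hr hne

theorem CallCorrect.branchBT (hA : A.WF) (hF : q ∉ P.aut.F)
    (hT : P.aut.T q = .branch q' q'')
    (h₁ : CallCorrect w A P q' i M M₁ (.failure (P.root.nu q)))
    (h₂ : CallCorrect w A P q'' i M₁ M₂ r) :
    CallCorrect w A P q i M (laAtRecord M₂ q i (laAtFinal q i r)) (laAtFinal q i r) := by
  intro hq hM
  rw [hq.nu_eq hA] at h₁
  have h₁ := h₁ (hq.target hA hF hT (.head _)) hM
  have h₂ := h₂ (hq.target hA hF hT (.tail _ (.head _))) h₁.table
  exact h₂.tail hq (.branchFail hF hT h₁.matches_failure)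

theorem CallCorrect.branchBTFail (hA : A.WF) (hF : q ∉ P.aut.F)
    (hT : P.aut.T q = .branch q' q'')
    (h₁ : CallCorrect w A P q' i M M₁ (.failure (P.root.nu q)))
    (h₂ : CallCorrect w A P q'' i M₁ M₂ (.failure j)) :
    CallCorrect w A P q i M (laAtRecord M₂ q i (.failure (min (P.root.nu q) j)))
      (.failure (min (P.root.nu q) j)) := by
  intro hq hM
  have h := CallCorrect.branchBT hA hF hT h₁ h₂ hq hM
  have hj : j ≤ P.stack.length := Nat.lt_succ_iff.1 h.result.lt_length
  rwa [hq.nu_eq hA, min_eq_right hj]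

theorem CallCorrect.charSucc (hA : A.WF) (hF : q ∉ P.aut.F) (hT : P.aut.T q = .char σ q')
    (hw : w[i]? = some σ) (h : CallCorrect w A P q' (i + 1) M M₁ r) :
    CallCorrect w A P q i M (laAtRecord M₁ q i (laAtFinal q i r)) (laAtFinal q i r) :=
  fun hq hM => (h (hq.target hA hF hT (.head _)) hM).tail hq (.charSucc hF hT hw)

theorem CallCorrect.charFail (hA : A.WF) (hF : q ∉ P.aut.F) (hT : P.aut.T q = .char σ q')
    (hw : w[i]? ≠ some σ) :
    CallCorrect w A P q i M (laAtRecord M q i (.failure (P.root.nu q)))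
      (.failure (P.root.nu q)) :=
  fun hq hM => .of_matches_failure (.charFail hF hT hw) hM hA hq

theorem CallCorrect.plaSuccAt (hA : A.WF) (hF : q ∉ P.aut.F)
    (hT : P.aut.T q = .sub .pla B q')
    (h₁ : CallCorrect w A (P.enter .pla B q') B.q0 i M M₁ (.successAt m K))
    (h₂ : CallCorrect w A P q' i (laAtBatch M₁ K .success) M₂ r) :
    CallCorrect w A P q i M (laAtRecord M₂ q i (laAtFinal q i r)) (laAtFinal q i r) := by
  intro hq hM
  have h₁ := h₁ (hq.enter hA hT) hM
  have h₂ := h₂ (hq.target hA hF hT (.head _)) (h₁.flush_lookaround rfl rfl)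
  exact h₂.tail hq (.plaSucc hF hT h₁.result.1)

theorem CallCorrect.plaBare (hA : A.WF) (hF : q ∉ P.aut.F)
    (hT : P.aut.T q = .sub .pla B q')
    (h₁ : CallCorrect w A (P.enter .pla B q') B.q0 i M M₁ .success)
    (h₂ : CallCorrect w A P q' i M₁ M₂ r) :
    CallCorrect w A P q i M (laAtRecord M₂ q i (laAtFinal q i r)) (laAtFinal q i r) := by
  intro hq hM
  have h₁ := h₁ (hq.enter hA hT) hM
  obtain ⟨m, hm⟩ := h₁.result.exists_successAt_of_success
  exact (h₂ (hq.target hA hF hT (.head _)) h₁.table).tail hq (.plaSucc hF hT hm)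

theorem CallCorrect.plaFail (hA : A.WF) (hF : q ∉ P.aut.F)
    (hT : P.aut.T q = .sub .pla B q')
    (h : CallCorrect w A (P.enter .pla B q') B.q0 i M M₁ (.failure j)) :
    CallCorrect w A P q i M (laAtRecord M₁ q i (.failure (P.root.nu q)))
      (.failure (P.root.nu q)) := by
  intro hq hM
  have h := h (hq.enter hA hT) hM
  have hfail : Matches w B B.q0 i .failure := h.result.matches_of_toResult rfl rfl
  exact .of_matches_failure (.plaFail hF hT hfail) h.table hA hq

theorem CallCorrect.atSuccSucc (hA : A.WF) (hF : q ∉ P.aut.F)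
    (hT : P.aut.T q = .sub .at B q')
    (h₁ : CallCorrect w A (P.enter .at B q') B.q0 i M M₁ (.successAt i' K'))
    (h₂ : CallCorrect w A P q' i' M₁ M₂ (.successAt m K)) :
    CallCorrect w A P q i M M₂ (laAtFinal q i (.successAt m (K' ∪ K))) := by
  intro hq hM
  have h₁ := h₁ (hq.enter hA hT) hM
  have h₂ := h₂ (hq.target hA hF hT (.head _)) h₁.table
  exact (h₂.union_keys h₁.result.2).tail hq (.atSucc hF hT h₁.result.1)

theorem CallCorrect.atSuccVal (hA : A.WF) (hF : q ∉ P.aut.F)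
    (hT : P.aut.T q = .sub .at B q')
    (h₁ : CallCorrect w A (P.enter .at B q') B.q0 i M M₁ (.successAt i' K))
    (h₂ : CallCorrect w A P q' i' M₁ M₂ v.toResult) :
    CallCorrect w A P q i M
      (laAtRecord (laAtBatch M₂ K v) q i (laAtFinal q i v.toResult))
      (laAtFinal q i v.toResult) := by
  intro hq hM
  have h₁ := h₁ (hq.enter hA hT) hM
  have h₂ := h₂ (hq.target hA hF hT (.head _)) h₁.table
  exact (h₂.flush_keys h₁.result.2).tail hq (.atSucc hF hT h₁.result.1)

theorem CallCorrect.atVal (hA : A.WF) (hF : q ∉ P.aut.F) (hT : P.aut.T q = .sub .at B q')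
    (h : CallCorrect w A (P.enter .at B q') B.q0 i M M₁ v.toResult)
    (hv : ∀ j, v = .failure j → j ≤ P.root.nu q) :
    CallCorrect w A P q i M (laAtRecord M₁ q i (laAtFinal q i v.toResult))
      (laAtFinal q i v.toResult) := by
  intro hq hM
  rw [hq.nu_eq hA] at hv
  obtain ⟨m, hm, h⟩ := (h (hq.enter hA hT) hM).exists_of_enter_at
    fun hlen => absurd (hv _ hlen) (by simp)
  exact h.tail hq (.atSucc hF hT hm)

theorem CallCorrect.atFailHigh (hA : A.WF) (hF : q ∉ P.aut.F)
    (hT : P.aut.T q = .sub .at B q')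
    (h : CallCorrect w A (P.enter .at B q') B.q0 i M M₁ (.failure j))
    (hj : P.root.nu q < j) :
    CallCorrect w A P q i M (laAtRecord M₁ q i (.failure (P.root.nu q)))
      (.failure (P.root.nu q)) := by
  intro hq hM
  have h := h (hq.enter hA hT) hM
  rw [hq.nu_eq hA] at hj
  obtain rfl : j = P.stack.length + 1 :=
    le_antisymm (Nat.lt_succ_iff.1 h.result.lt_length) hj
  exact .of_matches_failure (.atFail hF hT h.matches_failure) h.table hA hq

end CallCorrect

theorem MemoLaAtRun.callCorrect [DecidableEq S] {w : List Sigma} {A X B : SubNFA Sigma S}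
    {c : List (SubNFA Sigma S × S)} {la : Bool} {q : S} {i n : ℕ}
    {M M' : S × ℕ → Option LaAtVal} {r : LaAtResult S}
    (h : MemoLaAtRun w X B q i M M' r n) (hA : A.WF) :
    CallCorrect w A ⟨X, B, c, la⟩ q i M M' r := by
  induction h generalizing c la with
  | memoHit hv => exact .memoHit hA hv
  | accept _ hF => exact .accept hF
  | eps _ hF hT _ ih => exact .eps hA hF hT ih
  | branchNoBT _ hF hT _ hne ih => exact .branchNoBT hA hF hT ih fun hr => hne _ hr rfl
  | branchBTFail _ hF hT _ _ ih₁ ih₂ => exact .branchBTFail hA hF hT ih₁ ih₂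
  | branchBTOther _ hF hT _ _ _ ih₁ ih₂ => exact .branchBT hA hF hT ih₁ ih₂
  | charSucc _ hF hT hw _ ih => exact .charSucc hA hF hT hw ih
  | charFail _ hF hT hw => exact .charFail hA hF hT hw
  | plaSuccAt _ hF hT _ _ ih₁ ih₂ => exact .plaSuccAt hA hF hT ih₁ ih₂
  | plaBare _ hF hT _ _ ih₁ ih₂ => exact .plaBare hA hF hT ih₁ ih₂
  | plaFail _ hF hT _ ih => exact .plaFail hA hF hT ih
  | atSuccSucc _ hF hT _ _ ih₁ ih₂ => exact .atSuccSucc hA hF hT ih₁ ih₂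
  | atSuccBare _ hF hT _ _ ih₁ ih₂ => exact .atSuccVal (v := .success) hA hF hT ih₁ ih₂
  | @atSuccFail _ _ _ _ _ _ _ j _ _ _ _ _ _ _ hF hT _ _ ih₁ ih₂ =>
    exact .atSuccVal (v := .failure j) hA hF hT ih₁ ih₂
  | atBare _ hF hT _ ih => exact .atVal (v := .success) hA hF hT ih nofun
  | atFailHigh _ hF hT _ hj ih => exact .atFailHigh hA hF hT ih hj
  | @atFailLow _ _ _ _ _ _ j _ _ _ _ hF hT _ hj ih =>
    exact .atVal (v := .failure j) hA hF hT ih fun _ hv => LaAtVal.failure.inj hv ▸ hj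

/-! ## Termination -/

/-- The call `Memo-(la,at)^M_{X,A,w}(q, i)` terminates. -/
def Terminates [DecidableEq S] (w : List Sigma) (X A : SubNFA Sigma S) (q : S) (i : ℕ)
    (M : S × ℕ → Option LaAtVal) : Prop :=
  ∃ M' r n, MemoLaAtRun w X A q i M M' r n

section Terminates

variable [DecidableEq S] {w : List Sigma} {X A B : SubNFA Sigma S} {q q' q'' : S} {σ : Sigma}
  {i n : ℕ} {M M₁ : S × ℕ → Option LaAtVal} {r : LaAtResult S}

theorem Terminates.of_miss (h : M (q, i) = none → Terminates w X A q i M) :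
    Terminates w X A q i M := by
  cases hM : M (q, i) with
  | none => exact h hM
  | some v => exact ⟨_, _, _, .memoHit hM⟩

theorem Terminates.accept (hF : q ∈ A.F) : Terminates w X A q i M :=
  .of_miss fun hM => ⟨_, _, _, .accept hM hF⟩

theorem Terminates.eps (hF : q ∉ A.F) (hT : A.T q = .eps q') :
    Terminates w X A q' i M → Terminates w X A q i M :=
  fun ⟨_, _, _, h⟩ => .of_miss fun hM => ⟨_, _, _, .eps hM hF hT h⟩

theorem Terminates.branch (hF : q ∉ A.F) (hT : A.T q = .branch q' q'')
    (h₁ : MemoLaAtRun w X A q' i M M₁ r n)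
    (h₂ : r = .failure (X.nu q) → Terminates w X A q'' i M₁) : Terminates w X A q i M := by
  refine .of_miss fun hM => ?_
  by_cases hr : r = .failure (X.nu q)
  · subst hr
    obtain ⟨M₂, r₂, n₂, h₂⟩ := h₂ rfl
    cases r₂ with
    | failure j => exact ⟨_, _, _, .branchBTFail hM hF hT h₁ h₂⟩
    | _ => exact ⟨_, _, _, .branchBTOther hM hF hT h₁ h₂ nofun⟩
  · exact ⟨_, _, _, .branchNoBT hM hF hT h₁ fun j hj hjq => hr (hjq ▸ hj)⟩

theorem Terminates.charSucc (hF : q ∉ A.F) (hT : A.T q = .char σ q') (hw : w[i]? = some σ) :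
    Terminates w X A q' (i + 1) M → Terminates w X A q i M :=
  fun ⟨_, _, _, h⟩ => .of_miss fun hM => ⟨_, _, _, .charSucc hM hF hT hw h⟩

theorem Terminates.charFail (hF : q ∉ A.F) (hT : A.T q = .char σ q') (hw : w[i]? ≠ some σ) :
    Terminates w X A q i M :=
  .of_miss fun hM => ⟨_, _, _, .charFail hM hF hT hw⟩

theorem Terminates.pla (hF : q ∉ A.F) (hT : A.T q = .sub .pla B q')
    (h₁ : MemoLaAtRun w B B B.q0 i M M₁ r n)
    (hsuccAt : ∀ m K, r = .successAt m K → Terminates w X A q' i (laAtBatch M₁ K .success))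
    (hsucc : r = .success → Terminates w X A q' i M₁) : Terminates w X A q i M := by
  refine .of_miss fun hM => ?_
  cases r with
  | successAt m K =>
    obtain ⟨_, _, _, h₂⟩ := hsuccAt m K rfl
    exact ⟨_, _, _, .plaSuccAt hM hF hT h₁ h₂⟩
  | success =>
    obtain ⟨_, _, _, h₂⟩ := hsucc rfl
    exact ⟨_, _, _, .plaBare hM hF hT h₁ h₂⟩
  | failure j => exact ⟨_, _, _, .plaFail hM hF hT h₁⟩

theorem Terminates.at (hF : q ∉ A.F) (hT : A.T q = .sub .at B q')
    (h₁ : MemoLaAtRun w X B B.q0 i M M₁ r n)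
    (h₂ : ∀ m K, r = .successAt m K → Terminates w X A q' m M₁) : Terminates w X A q i M := by
  refine .of_miss fun hM => ?_
  cases r with
  | successAt m K =>
    obtain ⟨_, r₂, _, h₂⟩ := h₂ m K rfl
    cases r₂ with
    | successAt => exact ⟨_, _, _, .atSuccSucc hM hF hT h₁ h₂⟩
    | success => exact ⟨_, _, _, .atSuccBare hM hF hT h₁ h₂⟩
    | failure => exact ⟨_, _, _, .atSuccFail hM hF hT h₁ h₂⟩
  | success => exact ⟨_, _, _, .atBare hM hF hT h₁⟩
  | failure j =>
    obtain hj | hj := lt_or_ge (X.nu q) j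
    · exact ⟨_, _, _, .atFailHigh hM hF hT h₁ hj⟩
    · exact ⟨_, _, _, .atFailLow hM hF hT h₁ hj⟩

end Terminates

theorem LAMatchRun.terminates [DecidableEq S] {w : List Sigma} {A X B : SubNFA Sigma S}
    {c : List (SubNFA Sigma S × S)} {la : Bool} {q : S} {i : ℕ} {r : Result}
    {s : List (LaRunElem S)} {M : S × ℕ → Option LaAtVal} (h : LAMatchRun w B q i r s)
    (hA : A.WF) (hq : A.StateAt ⟨X, B, c, la⟩ q) (hM : Sound w A M) :
    Terminates w X B q i M := by
  induction h generalizing X c la M with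
  | accept hF => exact .accept hF
  | eps hF hT _ ih => exact .eps hF hT (ih (hq.target hA hF hT (.head _)) hM)
  | branchSucc hF hT hmatch ih =>
    have hq' := hq.target hA hF hT (.head _)
    obtain ⟨_, _, _, h⟩ := ih hq' hM
    refine .branch hF hT h fun hr => ?_
    rw [hr, hq.nu_eq hA] at h
    nomatch (h.callCorrect hA hq' hM).matches_failure.unique ⟨_, hmatch⟩
  | branchFail hF hT _ _ ih₁ ih₂ =>
    have hq' := hq.target hA hF hT (.head _)
    obtain ⟨_, _, _, h⟩ := ih₁ hq' hM
    exact .branch hF hT h fun _ =>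
      ih₂ (hq.target hA hF hT (.tail _ (.head _))) (h.callCorrect hA hq' hM).table
  | charSucc hF hT hw _ ih =>
    exact .charSucc hF hT hw (ih (hq.target hA hF hT (.head _)) hM)
  | charFail hF hT hw => exact .charFail hF hT hw
  | plaSucc hF hT _ _ ih₁ ih₂ =>
    have hq' := hq.target hA hF hT (.head _)
    obtain ⟨_, _, _, h⟩ := ih₁ (hq.enter hA hT) hM
    have hsound := h.callCorrect hA (hq.enter hA hT) hM
    refine .pla hF hT h (fun m K hr => ?_) fun _ => ih₂ hq' hsound.table
    subst hr
    exact ih₂ hq' (hsound.flush_lookaround rfl rfl)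
  | plaFail hF hT hmatch ih =>
    obtain ⟨_, _, _, h⟩ := ih (hq.enter hA hT) hM
    have hsound := h.callCorrect hA (hq.enter hA hT) hM
    refine .pla hF hT h (fun m K hr => ?_) fun hr => ?_ <;> subst hr
    · nomatch hsound.result.1.unique ⟨_, hmatch⟩
    · obtain ⟨m, hm⟩ := hsound.result.exists_successAt_of_success
      nomatch hm.unique ⟨_, hmatch⟩
  | atSucc hF hT hmatch _ ih₁ ih₂ =>
    obtain ⟨_, _, _, h⟩ := ih₁ (hq.enter hA hT) hM
    have hsound := h.callCorrect hA (hq.enter hA hT) hM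
    refine .at hF hT h fun m K hr => ?_
    subst hr
    cases hsound.result.1.unique ⟨_, hmatch⟩
    exact ih₂ (hq.target hA hF hT (.head _)) hsound.table
  | atFail hF hT hmatch ih =>
    obtain ⟨_, _, _, h⟩ := ih (hq.enter hA hT) hM
    have hsound := h.callCorrect hA (hq.enter hA hT) hM
    refine .at hF hT h fun m K hr => ?_
    subst hr
    nomatch hsound.result.1.unique ⟨_, hmatch⟩

/-! ## Top-level calls -/

theorem MemoLaAtRun.resultSound_top [DecidableEq S] {w : List Sigma} {A : SubNFA Sigma S}
    {q : S} {i n : ℕ} {M' : S × ℕ → Option LaAtVal} {ra : LaAtResult S}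
    (h : MemoLaAtRun w A A q i (fun _ => none) M' ra n) (hA : A.WF) (hq : q ∈ A.Q) :
    ResultSound w A (Place.top A) q i ra :=
  (h.callCorrect hA (.top hq) .empty).result

theorem MemoLaAtRun.ne_success_of_top [DecidableEq S] {w : List Sigma} {A : SubNFA Sigma S}
    {q : S} {i n : ℕ} {M' : S × ℕ → Option LaAtVal} {ra : LaAtResult S}
    (h : MemoLaAtRun w A A q i (fun _ => none) M' ra n) (hA : A.WF) (hq : q ∈ A.Q) :
    ra ≠ .success := by
  rintro rfl
  nomatch StackOutcome.eq_true_of_success (h.resultSound_top hA hq)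

theorem LaAtResult.exists_toResult?_eq_some {ra : LaAtResult S} (h : ra ≠ .success) :
    ∃ r, ra.toResult? = some r := by
  cases ra with
  | success => exact absurd rfl h
  | _ => exact ⟨_, rfl⟩

theorem memoLaAt_correct_general [DecidableEq S] {A : SubNFA Sigma S} (hA : A.WF)
    (w : List Sigma) {q : S} (hq : q ∈ A.Q) (i : ℕ) :
    (∀ {M' : S × ℕ → Option LaAtVal} {ra : LaAtResult S} {n : ℕ},
        MemoLaAtRun w A A q i (fun _ => none) M' ra n → ra ≠ .success) ∧
    ∀ r : Result, Matches w A q i r ↔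
      ∃ (M' : S × ℕ → Option LaAtVal) (ra : LaAtResult S) (n : ℕ),
        MemoLaAtRun w A A q i (fun _ => none) M' ra n ∧ ra.toResult? = some r := by
  refine ⟨fun h => h.ne_success_of_top hA hq, fun r => ⟨fun hmatch => ?_, ?_⟩⟩
  · obtain ⟨s, hs⟩ := hmatch
    obtain ⟨M', ra, n, h⟩ := hs.terminates hA (.top hq) .empty
    obtain ⟨r', hr'⟩ := LaAtResult.exists_toResult?_eq_some (h.ne_success_of_top hA hq)
    obtain rfl := ((h.resultSound_top hA hq).matches_of_toResult rfl hr').unique ⟨s, hs⟩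
    exact ⟨M', ra, n, h, hr'⟩
  · rintro ⟨M', ra, n, h, hr⟩
    exact (h.resultSound_top hA hq).matches_of_toResult rfl hr

/-- **Theorem 8** (correctness of the combined algorithm `Memo-(la,at)`): for every
(la,at)-NFA `A`, every input string `w`, and every position `i ∈ {0, …, |w|}`,
`Match-(la,at)_{A,w}(q0, i) = f(Memo-(la,at)^{M0}_{A,A,w}(q0, i))`, where `f` converts
results by `f(Failure(j)) = Failure` and `f(SuccessAt(i', K)) = SuccessAt(i')`
(a top-level call never returns the bare value `Success`). -/
theorem memoLaAt_correct {Sigma S : Type} [DecidableEq S]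
    (A : SubNFA Sigma S) (hWF : A.WF) (hK : A.IsLaAtNFA) (hLoop : A.NoEpsLoops)
    (w : List Sigma) (i : ℕ) (hi : i ≤ w.length) :
    (∀ {M' : S × ℕ → Option LaAtVal} {ra : LaAtResult S} {n : ℕ},
        MemoLaAtRun w A A A.q0 i (fun _ => none) M' ra n → ra ≠ LaAtResult.success) ∧
    ∀ r : Result,
      (∃ s, LAMatchRun w A A.q0 i r s) ↔
        (∃ (M' : S × ℕ → Option LaAtVal) (ra : LaAtResult S) (n : ℕ),
          MemoLaAtRun w A A A.q0 i (fun _ => none) M' ra n ∧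
            ra.toResult? = some r) :=
  memoLaAt_correct_general hWF w hWF.q0_mem i

end RegexMemo
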